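/- Let N be a lattice of rank d ≥ 1 with dual lattice M = Hom_ℤ(N, ℤ), and let σ ⊆ N_ℝ be a rational polyhedral cone with dim σ = d and σ ≠ N_ℝ. Let U ⊆ N_ℝ be a convex set of the form U = conv(F) + cone(G), where F ⊆ N_ℝ is finite and G ⊆ N is finite, such that: 0 ∈ U; ⋃_{t>0} tU = σ; and N ∩ U contains a finite set generating σ as a convex cone. Let a > 0 and suppose N ∩ int(aU) = ∅. Set l = d − dim(span of cone(G)), the corank of the recession cone of U; then l ≥ 1 and there exists a nonzero φ ∈ M with φ_ℝ nonnegative on σ and φ_ℝ(U) ⊆ [0, 1/γ(l,a)], where γ is defined by γ(1,a) = a and γ(k,a) = γ(k−1, a²/k²) for k ≥ 2. Since l ≤ d and γ(k,a) is nonincreasing in k, this strengthens the bound 1/γ(d,a). -/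

import Mathlib

open Pointwise

/-- The lattice `ℤ^d` viewed inside its realification `ℝ^d`
(a model of an arbitrary lattice of rank `d`); its dual lattice `M` is again `ℤ^d`,
paired by `⟨m, e⟩ = ∑ i, m i * e i`. -/
def intPts (d : ℕ) : Set (Fin d → ℝ) := {x | ∀ i, ∃ n : ℤ, x i = (n : ℝ)}

/-- The convex cone generated by a set `s`: all finite nonnegative linear
combinations of elements of `s`. -/
def coneHull {V : Type*} [AddCommGroup V] [Module ℝ V] (s : Set V) : Set V :=
  {x | ∃ (n : ℕ) (c : Fin n → ℝ) (v : Fin n → V),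
    (∀ i, 0 ≤ c i) ∧ (∀ i, v i ∈ s) ∧ x = ∑ i, c i • v i}

/-- The function `γ(d, a)` defined recursively by `γ(1, a) = a` and
`γ(d, a) = γ(d - 1, a² / d²)` for `d ≥ 2`. -/
noncomputable def gammaFn : ℕ → ℝ → ℝ
  | 0, a => a
  | 1, a => a
  | n + 2, a => gammaFn (n + 1) (a ^ 2 / ((n : ℝ) + 2) ^ 2)

theorem gammaFn_succ (k : ℕ) (hk : 1 ≤ k) (a : ℝ) :
    gammaFn (k + 1) a = gammaFn k (a ^ 2 / ((k : ℝ) + 1) ^ 2) := by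
  obtain ⟨m, rfl⟩ : ∃ m, k = m + 1 := ⟨k - 1, by omega⟩
  rw [gammaFn]
  push_cast
  congr 2
  ring

theorem gammaFn_pos (n : ℕ) (a : ℝ) (ha : 0 < a) : 0 < gammaFn n a := by
  induction n generalizing a with
  | zero => simpa [gammaFn]
  | succ n ih =>
    rcases Nat.eq_zero_or_pos n with rfl | hn
    · simpa [gammaFn]
    · rw [gammaFn_succ n hn]
      exact ih _ (by positivity)

theorem gammaFn_mono (n : ℕ) {a b : ℝ} (ha : 0 < a) (hab : a ≤ b) :
    gammaFn n a ≤ gammaFn n b := by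
  induction n generalizing a b with
  | zero => simpa [gammaFn]
  | succ n ih =>
    rcases Nat.eq_zero_or_pos n with rfl | hn
    · simpa [gammaFn]
    · rw [gammaFn_succ n hn, gammaFn_succ n hn]
      exact ih (by positivity) (by gcongr)

/-- Unrolling `i + 1` steps of the recursion defining `gammaFn`. -/
theorem gammaFn_unroll (i k : ℕ) (hk : 1 ≤ k) (a : ℝ) (ha : 0 < a)
    (han : a ≤ (k + i + 1 : ℕ)) :
    ∃ A : ℝ, 0 < A ∧ A ≤ (a ^ 2 / ((k + i + 1 : ℕ) : ℝ) ^ 2) *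
        (a / ((k + i + 1 : ℕ) : ℝ) ^ 2) ^ i ∧
      gammaFn (k + i + 1) a = gammaFn k A := by
  induction i generalizing k with
  | zero =>
    refine ⟨a ^ 2 / ((k + 1 : ℕ) : ℝ) ^ 2, by positivity, by simp, ?_⟩
    rw [add_zero, gammaFn_succ k hk]
    push_cast; rfl
  | succ i ih =>
    have e : k + (i + 1) + 1 = (k + 1) + i + 1 := by ring
    rw [e] at han ⊢
    obtain ⟨A, hA0, hA, h⟩ := ih (k + 1) (by omega) han
    set n : ℝ := ((k + 1 + i + 1 : ℕ) : ℝ) with hn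
    have hn1 : (0 : ℝ) < n := by rw [hn]; positivity
    have hq : a / n ^ 2 ≤ 1 / n := by
      rw [div_le_div_iff₀ (by positivity) hn1]
      nlinarith
    have hn2 : 1 ≤ n := by
      rw [hn]; push_cast
      have : (0 : ℝ) ≤ k := by positivity
      have : (0 : ℝ) ≤ i := by positivity
      linarith
    have hq1 : a / n ^ 2 ≤ 1 := hq.trans (by rw [div_le_one hn1]; exact hn2)
    have hkey : A / ((k : ℝ) + 1) ^ 2 ≤ a / n ^ 2 := by
      have hk1 : (1 : ℝ) ≤ k := by exact_mod_cast hk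
      rw [div_le_iff₀ (by positivity)]
      rcases Nat.eq_zero_or_pos i with rfl | hi
      · have hnk : n = k + 2 := by rw [hn]; push_cast; ring
        refine hA.trans ?_
        rw [pow_zero, mul_one, sq a, mul_div_right_comm]
        gcongr
        nlinarith
      · obtain ⟨i', rfl⟩ : ∃ i', i = i' + 1 := ⟨i - 1, by omega⟩
        have han2 : a ^ 2 / n ^ 2 ≤ 1 := by
          rw [div_le_one (by positivity)]; gcongr
        calc A ≤ a ^ 2 / n ^ 2 * (a / n ^ 2) ^ (i' + 1) := hA
          _ ≤ 1 * (a / n ^ 2) ^ 1 := by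
            gcongr ?_ * ?_
            exact pow_le_pow_of_le_one (by positivity) hq1 (by omega)
          _ = a / n ^ 2 * 1 := by ring
          _ ≤ _ := by gcongr; nlinarith
    refine ⟨A ^ 2 / ((k : ℝ) + 1) ^ 2, by positivity, ?_, ?_⟩
    · calc A ^ 2 / ((k : ℝ) + 1) ^ 2 = A * (A / ((k : ℝ) + 1) ^ 2) := by ring
        _ ≤ (a ^ 2 / n ^ 2 * (a / n ^ 2) ^ i) * (a / n ^ 2) := by gcongr
        _ = _ := by ring
    · rw [h, gammaFn_succ k hk]

theorem factorial_le_two_mul_sub_one_pow (j : ℕ) (hj : 1 ≤ j) :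
    ((j.factorial : ℕ) : ℝ) ≤ (2 * (j : ℝ) - 1) ^ j := by
  have hj1 : (1 : ℝ) ≤ j := by exact_mod_cast hj
  calc ((j.factorial : ℕ) : ℝ) ≤ (j : ℝ) ^ j := by exact_mod_cast Nat.factorial_le_pow j
    _ ≤ _ := by gcongr; linarith

/-- The numerical estimate needed to pass to a slice of corank `j`. -/
theorem gammaFn_le_slice (n j : ℕ) (hj : 1 ≤ j) (hjn : j < n) (a : ℝ) (ha : 0 < a)
    (han : a ≤ n) :
    gammaFn n a ≤ gammaFn (n - j)
      (a / (j.factorial / ((2 * (j : ℝ) - 1) * a / (n : ℝ) ^ 2) ^ j)) := by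
  obtain ⟨k, i, hk, rfl, rfl⟩ : ∃ k i, 1 ≤ k ∧ j = i + 1 ∧ n = k + i + 1 :=
    ⟨n - j, j - 1, by omega, by omega, by omega⟩
  obtain ⟨A, hA0, hA, h⟩ := gammaFn_unroll i k hk a ha han
  rw [h, show k + i + 1 - (i + 1) = k by omega]
  apply gammaFn_mono k hA0
  refine hA.trans ?_
  have hf := factorial_le_two_mul_sub_one_pow (i + 1) (by omega)
  set n : ℝ := ((k + i + 1 : ℕ) : ℝ) with hn
  have hfp : (0 : ℝ) < ((i + 1).factorial : ℕ) := by positivity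
  rw [div_div_eq_mul_div, le_div_iff₀ hfp]
  rw [show (2 * ((i + 1 : ℕ) : ℝ) - 1) * a / n ^ 2
    = (2 * ((i + 1 : ℕ) : ℝ) - 1) * (a / n ^ 2) by ring, mul_pow]
  calc a ^ 2 / n ^ 2 * (a / n ^ 2) ^ i * ((i + 1).factorial : ℕ)
      = a * (((i + 1).factorial : ℕ) * (a / n ^ 2) ^ (i + 1)) := by ring
    _ ≤ _ := by gcongr

theorem gammaFn_le_case_one (n j : ℕ) (hj : 1 ≤ j) (hjn : j ≤ n) (a : ℝ) (ha : 0 < a)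
    (han : a ≤ n) (h2 : n = 2 → a ≤ 1) :
    gammaFn n a ≤ 1 / (j.factorial / ((2 * (j : ℝ) - 1) * a / (n : ℝ) ^ 2) ^ j) := by
  have hfp : (0 : ℝ) < (j.factorial : ℕ) := by positivity
  rw [one_div_div, le_div_iff₀ hfp]
  rw [show (2 * (j : ℝ) - 1) * a / (n : ℝ) ^ 2
    = (2 * (j : ℝ) - 1) * (a / (n : ℝ) ^ 2) by ring, mul_pow]
  obtain rfl | rfl | hn : n = 1 ∨ n = 2 ∨ 3 ≤ n := by omega
  · obtain rfl : j = 1 := by omega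
    norm_num [gammaFn]
  · have h2 := h2 rfl
    rw [gammaFn, gammaFn]
    obtain rfl | rfl : j = 1 ∨ j = 2 := by omega
    · norm_num [Nat.factorial]; nlinarith
    · norm_num [Nat.factorial]; nlinarith [sq_nonneg a]
  obtain ⟨i, rfl⟩ : ∃ i, n = 2 + i + 1 := ⟨n - 3, by omega⟩
  obtain ⟨A, hA0, hA, h⟩ := gammaFn_unroll i 2 (by norm_num) a ha han
  rw [h, gammaFn, gammaFn]
  have hn0 : (0 : ℝ) < ((2 + i + 1 : ℕ) : ℝ) := by positivity
  set q : ℝ := a / ((2 + i + 1 : ℕ) : ℝ) ^ 2 with hq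
  have hq0 : 0 < q := by positivity
  have hqn : q ≤ 1 / ((2 + i + 1 : ℕ) : ℝ) := by
    rw [hq, div_le_div_iff₀ (by positivity) hn0]
    nlinarith
  have haq : a ^ 2 / ((2 + i + 1 : ℕ) : ℝ) ^ 2 = ((2 + i + 1 : ℕ) : ℝ) ^ 2 * q ^ 2 := by
    rw [hq]; field_simp
  rw [haq] at hA
  obtain ⟨m, hm⟩ : ∃ m, m + j = 2 * i + 4 := ⟨2 * i + 4 - j, by omega⟩
  have hA2 : A ^ 2 ≤ ((2 + i + 1 : ℕ) : ℝ) ^ 4 * q ^ m * q ^ j := by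
    calc A ^ 2 ≤ (((2 + i + 1 : ℕ) : ℝ) ^ 2 * q ^ 2 * q ^ i) ^ 2 := by gcongr
      _ = ((2 + i + 1 : ℕ) : ℝ) ^ 4 * q ^ (2 * i + 4) := by ring
      _ = _ := by rw [← hm]; ring
  have hqm : q ^ m ≤ (1 / ((2 + i + 1 : ℕ) : ℝ)) ^ m := by gcongr
  suffices hs : ((2 + i + 1 : ℕ) : ℝ) ^ 4 * (1 / ((2 + i + 1 : ℕ) : ℝ)) ^ m
      * (j.factorial : ℕ) ≤ 4 * (2 * (j : ℝ) - 1) ^ j by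
    calc A ^ 2 / ((0 : ℕ) + 2 : ℝ) ^ 2 * (j.factorial : ℕ)
        = A ^ 2 * ((j.factorial : ℕ) / 4) := by norm_num; ring
      _ ≤ (((2 + i + 1 : ℕ) : ℝ) ^ 4 * (1 / ((2 + i + 1 : ℕ) : ℝ)) ^ m * q ^ j)
          * ((j.factorial : ℕ) / 4) := by
        gcongr; exact hA2.trans (by gcongr)
      _ = (((2 + i + 1 : ℕ) : ℝ) ^ 4 * (1 / ((2 + i + 1 : ℕ) : ℝ)) ^ m
          * (j.factorial : ℕ)) * (q ^ j / 4) := by ring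
      _ ≤ (4 * (2 * (j : ℝ) - 1) ^ j) * (q ^ j / 4) := by gcongr
      _ = _ := by ring
  have hf := factorial_le_two_mul_sub_one_pow j hj
  by_cases hm4 : 4 ≤ m
  · have h1 : ((2 + i + 1 : ℕ) : ℝ) ^ 4 * (1 / ((2 + i + 1 : ℕ) : ℝ)) ^ m ≤ 1 := by
      have : (1 / ((2 + i + 1 : ℕ) : ℝ)) ^ m ≤ (1 / ((2 + i + 1 : ℕ) : ℝ)) ^ 4 := by
        apply pow_le_pow_of_le_one (by positivity) _ hm4
        rw [div_le_one hn0]; push_cast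
        have : (0 : ℝ) ≤ i := by positivity
        linarith
      calc _ ≤ ((2 + i + 1 : ℕ) : ℝ) ^ 4 * (1 / ((2 + i + 1 : ℕ) : ℝ)) ^ 4 := by gcongr
        _ = 1 := by field_simp
    calc _ ≤ 1 * ((j.factorial : ℕ) : ℝ) := by gcongr
      _ ≤ _ := by linarith
  · have hi : i ≤ 2 := by omega
    interval_cases i
    · have hj' : j ≤ 3 := by omega
      interval_cases j
      · obtain rfl : m = 3 := by omega
        norm_num [Nat.factorial]
      · obtain rfl : m = 2 := by omega
        norm_num [Nat.factorial]
      · obtain rfl : m = 1 := by omega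
        norm_num [Nat.factorial]
    · have hj' : j ≤ 4 := by omega
      have hj'' : 3 ≤ j := by omega
      interval_cases j
      · obtain rfl : m = 3 := by omega
        norm_num [Nat.factorial]
      · obtain rfl : m = 2 := by omega
        norm_num [Nat.factorial]
    · obtain rfl : j = 5 := by omega
      obtain rfl : m = 3 := by omega
      norm_num [Nat.factorial]

section IntPts
variable {n : ℕ}

theorem intPts_zero : (0 : Fin n → ℝ) ∈ intPts n := fun _ => ⟨0, by simp⟩

theorem intPts_add {x y : Fin n → ℝ} (hx : x ∈ intPts n) (hy : y ∈ intPts n) :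
    x + y ∈ intPts n := fun i => by
  obtain ⟨p, hp⟩ := hx i
  obtain ⟨q, hq⟩ := hy i
  exact ⟨p + q, by simp [hp, hq]⟩

theorem intPts_zsmul (m : ℤ) {x : Fin n → ℝ} (hx : x ∈ intPts n) :
    (m : ℝ) • x ∈ intPts n := fun i => by
  obtain ⟨p, hp⟩ := hx i
  exact ⟨m * p, by simp [hp]⟩

theorem intPts_neg {x : Fin n → ℝ} (hx : x ∈ intPts n) : -x ∈ intPts n := by
  simpa using intPts_zsmul (-1) hx

theorem intPts_sub {x y : Fin n → ℝ} (hx : x ∈ intPts n) (hy : y ∈ intPts n) :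
    x - y ∈ intPts n := by
  simpa [sub_eq_add_neg] using intPts_add hx (intPts_neg hy)

theorem intPts_sum {ι : Type*} (t : Finset ι) (f : ι → Fin n → ℝ)
    (h : ∀ i ∈ t, f i ∈ intPts n) : ∑ i ∈ t, f i ∈ intPts n :=
  Finset.sum_induction f (· ∈ intPts n) (fun _ _ => intPts_add) intPts_zero h

theorem intPts_single (i : Fin n) : (Pi.single i 1 : Fin n → ℝ) ∈ intPts n := fun k => by
  by_cases h : k = i
  · subst h; exact ⟨1, by simp⟩
  · exact ⟨0, by simp [h]⟩

theorem det_mem_int {j : ℕ} (v : Fin j → Fin j → ℝ) (hv : ∀ i, v i ∈ intPts j) :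
    ∃ m : ℤ, (Matrix.of v).det = m := by
  choose f hf using hv
  refine ⟨(Matrix.of f).det, ?_⟩
  have h := RingHom.map_det (Int.castRingHom ℝ) (Matrix.of f)
  rw [eq_intCast] at h
  rw [h]
  congr 1
  ext i k
  simp [hf]

/-- A bounded set contains only finitely many lattice points. -/
theorem finite_intPts_inter {K : Set (Fin n → ℝ)} (hK : IsCompact K) :
    (intPts n ∩ K).Finite := by
  obtain ⟨R, hR⟩ := hK.isBounded.exists_norm_le
  refine ((Set.Finite.pi' fun _ : Fin n => Set.finite_Icc (-⌈R⌉) ⌈R⌉).image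
    fun f i => ((f i : ℤ) : ℝ)).subset ?_
  rintro x ⟨hx, hxK⟩
  choose f hf using hx
  refine ⟨f, fun i => ?_, funext fun i => (hf i).symm⟩
  have h1 : |(f i : ℝ)| ≤ (⌈R⌉ : ℤ) := by
    rw [← hf i]; exact ((norm_le_pi_norm x i).trans (hR x hxK)).trans (Int.le_ceil R)
  exact abs_le.1 (by exact_mod_cast h1)

end IntPts

section Cone
variable {V W : Type*} [AddCommGroup V] [Module ℝ V] [AddCommGroup W] [Module ℝ W]

theorem mem_coneHull_finset {ι : Type*} (t : Finset ι) (v : ι → V) (c : ι → ℝ) {s : Set V}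
    (hc : ∀ i ∈ t, 0 ≤ c i) (hv : ∀ i ∈ t, v i ∈ s) : ∑ i ∈ t, c i • v i ∈ coneHull s := by
  refine ⟨t.card, fun k => c (t.equivFin.symm k), fun k => v (t.equivFin.symm k),
    fun k => hc _ (t.equivFin.symm k).2, fun k => hv _ (t.equivFin.symm k).2, ?_⟩
  rw [← Finset.sum_coe_sort]
  exact (Equiv.sum_comp t.equivFin.symm (fun i : t => c i • v i)).symm

theorem coneHull_zero (s : Set V) : (0 : V) ∈ coneHull s :=
  ⟨0, Fin.elim0, Fin.elim0, fun i => i.elim0, fun i => i.elim0, by simp⟩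

theorem coneHull_add {s : Set V} {x y : V} (hx : x ∈ coneHull s) (hy : y ∈ coneHull s) :
    x + y ∈ coneHull s := by
  obtain ⟨n, c, v, hc, hv, rfl⟩ := hx
  obtain ⟨m, d, w, hd, hw, rfl⟩ := hy
  have := mem_coneHull_finset (s := s) (Finset.univ : Finset (Fin n ⊕ Fin m)) (Sum.elim v w)
    (Sum.elim c d) (by rintro (i | i) _ <;> simp [hc, hd])
    (by rintro (i | i) _ <;> simp [hv, hw])
  simpa [Fintype.sum_sum_type] using this

theorem coneHull_smul {s : Set V} {x : V} {r : ℝ} (hr : 0 ≤ r) (hx : x ∈ coneHull s) :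
    r • x ∈ coneHull s := by
  obtain ⟨n, c, v, hc, hv, rfl⟩ := hx
  exact ⟨n, fun i => r * c i, v, fun i => mul_nonneg hr (hc i), hv,
    by simp [Finset.smul_sum, smul_smul]⟩

theorem subset_coneHull (s : Set V) : s ⊆ coneHull s := fun x hx =>
  ⟨1, fun _ => 1, fun _ => x, fun _ => zero_le_one, fun _ => hx, by simp⟩

theorem coneHull_sum {ι : Type*} (t : Finset ι) (f : ι → V) {s : Set V}
    (h : ∀ i ∈ t, f i ∈ coneHull s) : ∑ i ∈ t, f i ∈ coneHull s :=
  Finset.sum_induction f (· ∈ coneHull s) (fun _ _ => coneHull_add) (coneHull_zero s) h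

theorem coneHull_subset {s t : Set V} (h : s ⊆ coneHull t) : coneHull s ⊆ coneHull t := by
  rintro _ ⟨n, c, v, hc, hv, rfl⟩
  exact coneHull_sum _ _ fun i _ => coneHull_smul (hc i) (h (hv i))

theorem coneHull_mono {s t : Set V} (h : s ⊆ t) : coneHull s ⊆ coneHull t :=
  coneHull_subset (h.trans (subset_coneHull t))

theorem coneHull_image (f : V →ₗ[ℝ] W) (s : Set V) : coneHull (f '' s) = f '' coneHull s := by
  ext x
  constructor
  · rintro ⟨n, c, v, hc, hv, rfl⟩
    choose w hw hwv using hv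
    exact ⟨∑ i, c i • w i, ⟨n, c, w, hc, hw, rfl⟩, by simp [hwv]⟩
  · rintro ⟨_, ⟨n, c, v, hc, hv, rfl⟩, rfl⟩
    exact ⟨n, c, fun i => f (v i), hc, fun i => ⟨_, hv i, rfl⟩, by simp⟩

theorem nonneg_of_mem_coneHull (f : V →ₗ[ℝ] ℝ) {s : Set V} (h : ∀ v ∈ s, 0 ≤ f v) {x : V}
    (hx : x ∈ coneHull s) : 0 ≤ f x := by
  obtain ⟨n, c, v, hc, hv, rfl⟩ := hx
  simp only [map_sum, map_smul, smul_eq_mul]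
  exact Finset.sum_nonneg fun i _ => mul_nonneg (hc i) (h _ (hv i))

theorem coneHull_subset_span (s : Set V) : coneHull s ⊆ Submodule.span ℝ s := by
  rintro _ ⟨n, c, v, hc, hv, rfl⟩
  exact Submodule.sum_mem _ fun i _ => Submodule.smul_mem _ _ (Submodule.subset_span (hv i))

theorem span_coneHull (s : Set V) : Submodule.span ℝ (coneHull s) = Submodule.span ℝ s :=
  le_antisymm (Submodule.span_le.2 (coneHull_subset_span s))
    (Submodule.span_mono (subset_coneHull s))

theorem convex_coneHull (s : Set V) : Convex ℝ (coneHull s) := fun _ hx _ hy _ _ ha hb _ =>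
  coneHull_add (coneHull_smul ha hx) (coneHull_smul hb hy)

/-- Conical Carathéodory: a conical combination of a family can be rewritten using a linearly
independent subfamily. -/
theorem exists_linearIndepOn_conical {ι : Type*} (v : ι → V) {T : Set ι} {x : V}
    (hx : x ∈ coneHull (v '' T)) :
    ∃ (B : Finset ι) (c : ι → ℝ), (B : Set ι) ⊆ T ∧ LinearIndepOn ℝ v (B : Set ι) ∧
      (∀ i ∈ B, 0 < c i) ∧ x = ∑ i ∈ B, c i • v i := by
  classical
  have hex : ∃ k : ℕ, ∃ (B : Finset ι) (c : ι → ℝ), B.card = k ∧ (B : Set ι) ⊆ T ∧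
      (∀ i ∈ B, 0 ≤ c i) ∧ x = ∑ i ∈ B, c i • v i := by
    obtain ⟨n, c, w, hc, hw, rfl⟩ := hx
    choose g hg hgw using hw
    refine ⟨_, Finset.univ.image g, fun i => ∑ k with g k = i, c k, rfl, by
      intro y; simp only [Finset.coe_image, Finset.coe_univ, Set.image_univ]
      rintro ⟨k, rfl⟩; exact hg k, fun i _ => Finset.sum_nonneg fun k _ => hc k, ?_⟩
    rw [← Finset.sum_fiberwise_of_maps_to (s := Finset.univ) (t := Finset.univ.image g) (g := g)
      (by simp)]
    refine Finset.sum_congr rfl fun i _ => ?_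
    rw [Finset.sum_smul]
    refine Finset.sum_congr rfl fun k hk => ?_
    rw [← hgw, (Finset.mem_filter.1 hk).2]
  obtain ⟨B, c, hBk, hBT, hc, hx⟩ := Nat.find_spec hex
  have hmin : ∀ (B' : Finset ι) (c' : ι → ℝ), (B' : Set ι) ⊆ T → (∀ i ∈ B', 0 ≤ c' i) →
      x = ∑ i ∈ B', c' i • v i → B.card ≤ B'.card := fun B' c' h1 h2 h3 => by
    rw [hBk]; exact Nat.find_min' hex ⟨B', c', rfl, h1, h2, h3⟩
  have hred : ∀ c' : ι → ℝ, (∀ i ∈ B, 0 ≤ c' i) → x = ∑ i ∈ B, c' i • v i →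
      ∀ i ∈ B, 0 < c' i := by
    intro c' h1 h2 i hi
    refine lt_of_le_of_ne (h1 i hi) fun h0 => ?_
    have := hmin (B.erase i) c' (fun y hy => hBT (Finset.mem_of_mem_erase hy))
      (fun y hy => h1 y (Finset.mem_of_mem_erase hy))
      (by rw [h2, ← Finset.add_sum_erase B _ hi, ← h0]; simp)
    have := Finset.card_erase_lt_of_mem hi
    omega
  refine ⟨B, c, hBT, ?_, hred c hc hx, hx⟩
  rw [linearIndepOn_finset_iff]
  by_contra! hdep
  obtain ⟨g, hg, i0, hi0, hgi0⟩ := hdep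
  wlog hpos : 0 < g i0 generalizing g
  · exact this (fun i => -g i) (by simp [hg]) (by simpa using hgi0)
      (by have := lt_of_le_of_ne (not_lt.1 hpos) hgi0; simpa using this)
  obtain ⟨i1, hi1, hm⟩ := Finset.exists_min_image (B.filter fun i => 0 < g i)
    (fun i => c i / g i) ⟨i0, by simp [hi0, hpos]⟩
  rw [Finset.mem_filter] at hi1
  have := hred (fun i => c i - c i1 / g i1 * g i) (fun i hi => by
      rcases le_or_gt (g i) 0 with h | h
      · have h1 : 0 ≤ c i1 / g i1 := div_nonneg (hc _ hi1.1) hi1.2.le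
        have h2 := hc i hi
        nlinarith
      · have := hm i (by simp [hi, h])
        rw [le_div_iff₀ h] at this
        linarith) (by
      simp only [sub_smul, Finset.sum_sub_distrib, mul_smul, ← Finset.smul_sum, hg]
      simpa using hx) i1 hi1.1
  simp [hi1.2.ne'] at this

theorem isClosed_coneHull {j : ℕ} {S : Set (Fin j → ℝ)} (hS : S.Finite) :
    IsClosed (coneHull S) := by
  have hU : coneHull S = ⋃ B ∈ {B : Finset (Fin j → ℝ) | (B : Set (Fin j → ℝ)) ⊆ S ∧
      LinearIndepOn ℝ (id : (Fin j → ℝ) → _) (B : Set (Fin j → ℝ))},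
      (fun c : B → ℝ => ∑ i : B, c i • (i : Fin j → ℝ)) '' {c | ∀ i, 0 ≤ c i} := by
    ext x
    simp only [Set.mem_iUnion, Set.mem_image, Set.mem_ofPred_eq, exists_prop]
    constructor
    · intro hx
      obtain ⟨B, c, hB, hli, hc, rfl⟩ := exists_linearIndepOn_conical (id : (Fin j → ℝ) → _)
        (T := S) (x := x) (by simpa using hx)
      exact ⟨B, ⟨hB, hli⟩, fun i => c i, fun i => (hc i i.2).le,
        Finset.sum_coe_sort B fun i => c i • i⟩
    · rintro ⟨B, ⟨hB, -⟩, c, hc, rfl⟩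
      exact mem_coneHull_finset _ _ _ (fun i _ => hc i) (fun i _ => hB i.2)
  rw [hU]
  refine Set.Finite.isClosed_biUnion ?_ ?_
  · refine (hS.toFinset.powerset.finite_toSet).subset ?_
    rintro B ⟨hB, -⟩
    simpa [Finset.subset_iff] using hB
  · rintro B ⟨-, hli⟩
    have hinj : Function.Injective (Fintype.linearCombination ℝ (fun i : B => (i : Fin j → ℝ))) :=
      linearIndependent_iff_injective_fintypeLinearCombination.1 hli
    have hcl := LinearMap.isClosedEmbedding_of_injective (LinearMap.ker_eq_bot.2 hinj)
    have : IsClosed {c : B → ℝ | ∀ i, 0 ≤ c i} := by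
      simp only [Set.ofPred_forall]
      exact isClosed_iInter fun i => isClosed_le continuous_const (continuous_apply i)
    exact hcl.isClosedMap _ this

theorem farkas {j : ℕ} {S : Set (Fin j → ℝ)} (hS : S.Finite) {p : Fin j → ℝ}
    (hp : p ∉ coneHull S) :
    ∃ f : (Fin j → ℝ) →ₗ[ℝ] ℝ, (∀ v ∈ S, 0 ≤ f v) ∧ f p < 0 := by
  obtain ⟨f, u, hfp, hf⟩ := geometric_hahn_banach_point_closed (convex_coneHull S)
    (isClosed_coneHull hS) hp
  have hu : u < 0 := by simpa using hf 0 (coneHull_zero S)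
  refine ⟨f, fun v hv => ?_, hfp.trans hu⟩
  by_contra! hneg
  have := hf ((u / f v) • v) (coneHull_smul (div_nonneg_of_nonpos hu.le hneg.le)
    (subset_coneHull S hv))
  rw [map_smul, smul_eq_mul] at this
  exact this.ne (div_mul_cancel₀ _ hneg.ne).symm

/-- Conical Carathéodory with a full basis. -/
theorem exists_basis_conical {j : ℕ} (π : V →ₗ[ℝ] (Fin j → ℝ)) {A T : Set V} (hAT : A ⊆ T)
    (hT : Submodule.span ℝ (π '' T) = ⊤) {x : Fin j → ℝ} (hx : x ∈ coneHull (π '' A)) :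
    ∃ (E : Fin j → V) (c : Fin j → ℝ), (∀ i, E i ∈ T) ∧ (∀ i, 0 ≤ c i) ∧
      (∀ i, c i ≠ 0 → E i ∈ A) ∧
      LinearIndependent ℝ (fun i => π (E i)) ∧ x = ∑ i, c i • π (E i) := by
  classical
  obtain ⟨B, c, hBA, hli, hc, rfl⟩ := exists_linearIndepOn_conical π hx
  obtain ⟨b, hbT, hBb, hspan, hbli⟩ := exists_linearIndepOn_extension hli (hBA.trans hAT)
  have hfin : Finite b := hbli.finite
  have : Fintype b := Fintype.ofFinite b
  have hspan' : ⊤ ≤ Submodule.span ℝ (Set.range fun i : b => π i) := by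
    rw [← hT, Set.range_comp' π, Subtype.range_coe]
    exact Submodule.span_le.2 hspan
  let bas := Module.Basis.mk hbli hspan'
  have hcard : Fintype.card b = j := by
    rw [← Module.finrank_eq_card_basis bas]; simp
  let e : Fin j ≃ b := (Fintype.equivFinOfCardEq hcard).symm
  refine ⟨fun i => e i, fun i => if (e i : V) ∈ B then c (e i) else 0, fun i => hbT (e i).2,
    fun i => ?_, fun i hi => ?_, LinearIndependent.comp hbli e e.injective, ?_⟩
  · dsimp only
    split_ifs with h
    · exact (hc _ h).le
    · exact le_rfl
  · by_contra h
    exact hi (if_neg fun h' => h (hBA h'))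
  · rw [Equiv.sum_comp e (fun i : b => (if (i : V) ∈ B then c i else 0) • π i)]
    simp only [ite_smul, zero_smul]
    rw [← Finset.sum_filter]
    refine Finset.sum_bij (fun i hi => (⟨i, hBb hi⟩ : b)) (by simp) (by simp) (fun i hi => ?_)
      (by simp)
    exact ⟨i, (Finset.mem_filter.1 hi).2, rfl⟩

theorem exists_basis_mem {j : ℕ} (π : V →ₗ[ℝ] (Fin j → ℝ)) {T : Set V}
    (hT : Submodule.span ℝ (π '' T) = ⊤) :
    ∃ E : Fin j → V, (∀ i, E i ∈ T) ∧ LinearIndependent ℝ (fun i => π (E i)) := by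
  obtain ⟨E, c, h1, -, -, h2, -⟩ := exists_basis_conical π subset_rfl hT (coneHull_zero _)
  exact ⟨E, h1, h2⟩

/-- Moving a nonnegative functional until it vanishes at a new point of a finite set. -/
theorem exists_step {T : Set V} (hT : T.Finite) (f η : V →ₗ[ℝ] ℝ)
    (hf : ∀ v ∈ T, 0 ≤ f v) (hη : ∀ v ∈ T, f v = 0 → η v = 0) (hneg : ∃ v ∈ T, η v < 0) :
    ∃ s : ℝ, 0 < s ∧ (∀ v ∈ T, 0 ≤ f v + s * η v) ∧ ∃ v ∈ T, η v < 0 ∧ f v + s * η v = 0 := by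
  obtain ⟨v0, ⟨hv0, hv0n⟩, hmin⟩ := (T ∩ {v | η v < 0}).exists_min_image
    (fun v => f v / (-η v)) (hT.subset Set.inter_subset_left) (by
      obtain ⟨v, h1, h2⟩ := hneg; exact ⟨v, h1, h2⟩)
  have hv0n : η v0 < 0 := hv0n
  have hfpos : ∀ v ∈ T, η v < 0 → 0 < f v := fun v hv h =>
    lt_of_le_of_ne (hf v hv) fun h0 => h.ne (hη v hv h0.symm)
  refine ⟨f v0 / (-η v0), div_pos (hfpos v0 hv0 hv0n) (by linarith), fun v hv => ?_,
    v0, hv0, hv0n, by rw [div_neg, neg_mul, div_mul_cancel₀ _ hv0n.ne, add_neg_cancel]⟩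
  rcases lt_or_ge (η v) 0 with h | h
  · have := hmin v ⟨hv, h⟩
    rw [le_div_iff₀ (by linarith)] at this
    linarith
  · have : 0 ≤ f v0 / (-η v0) := (div_pos (hfpos v0 hv0 hv0n) (by linarith)).le
    have := hf v hv
    positivity

theorem exists_step_small {T : Set V} (hT : T.Finite) (f η : V →ₗ[ℝ] ℝ)
    (hf : ∀ v ∈ T, 0 ≤ f v) (hη : ∀ v ∈ T, f v = 0 → 0 ≤ η v) :
    ∃ s : ℝ, 0 < s ∧ (∀ v ∈ T, 0 ≤ f v + s * η v) := by
  by_cases hneg : ∃ v ∈ T, η v < 0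
  · obtain ⟨v0, ⟨hv0, hv0n⟩, hmin⟩ := (T ∩ {v | η v < 0}).exists_min_image
      (fun v => f v / (-η v)) (hT.subset Set.inter_subset_left) (by
        obtain ⟨v, h1, h2⟩ := hneg; exact ⟨v, h1, h2⟩)
    have hv0n : η v0 < 0 := hv0n
    have hpos : 0 < f v0 / (-η v0) := div_pos (lt_of_le_of_ne (hf v0 hv0) fun h0 =>
      hv0n.not_ge (hη v0 hv0 h0.symm)) (by linarith)
    refine ⟨_, hpos, fun v hv => ?_⟩
    rcases lt_or_ge (η v) 0 with h | h
    · have := hmin v ⟨hv, h⟩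
      rw [le_div_iff₀ (by linarith)] at this
      linarith
    · have := hf v hv
      positivity
  · push Not at hneg
    exact ⟨1, one_pos, fun v hv => by have := hf v hv; have := hneg v hv; linarith⟩

end Cone

section Det
variable {j : ℕ}

theorem det_sub_of_eq_sum (E : Fin j → Fin j → ℝ) (c : Fin j → ℝ) (p : Fin j → ℝ)
    (hp : p = ∑ i, c i • E i) :
    (Matrix.of fun i => E i - p).det = (Matrix.of E).det * (1 - ∑ i, c i) := by
  have h : (Matrix.of fun i => E i - p) =
      (1 + Matrix.replicateCol Unit (fun _ : Fin j => (-1 : ℝ)) * Matrix.replicateRow Unit c)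
        * Matrix.of E := by
    ext i k
    rw [Matrix.add_mul, Matrix.one_mul]
    simp [Matrix.mul_apply, hp, sub_eq_add_neg]
  rw [h, Matrix.det_mul, mul_comm]
  congr 1
  rw [Matrix.det_one_add_replicateCol_mul_replicateRow]
  simp [dotProduct, sub_eq_add_neg]

theorem det_ne_zero_of_linearIndependent {E : Fin j → Fin j → ℝ} (h : LinearIndependent ℝ E) :
    (Matrix.of E).det ≠ 0 := by
  have := Matrix.linearIndependent_rows_iff_isUnit (A := Matrix.of E)
  have := (Matrix.isUnit_iff_isUnit_det _).1 (this.1 h)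
  exact this.ne_zero

/-- Cramer: the coordinates of a lattice point have denominator dividing the determinant. -/
theorem det_mul_coord_int (E : Fin j → Fin j → ℝ) (hE : ∀ i, E i ∈ intPts j)
    (c : Fin j → ℝ) (h : ∑ i, c i • E i ∈ intPts j) (i : Fin j) :
    ∃ m : ℤ, (Matrix.of E).det * c i = m := by
  have h1 := Matrix.det_updateRow_sum (Matrix.of E) i c
  rw [smul_eq_mul, mul_comm] at h1
  rw [← h1]
  refine det_mem_int (fun k => (Matrix.of E).updateRow i (∑ k, c k • Matrix.of E k) k) fun k => ?_
  by_cases hk : k = i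
  · subst hk; rw [Matrix.updateRow_self]; exact h
  · rw [Matrix.updateRow_ne hk]; exact hE k

end Det

theorem mem_span_basisFun_iff {n : ℕ} (x : Fin n → ℝ) :
    x ∈ Submodule.span ℤ (Set.range (Pi.basisFun ℝ (Fin n))) ↔ x ∈ intPts n := by
  rw [Module.Basis.mem_span_iff_repr_mem]
  refine forall_congr' fun i => ?_
  simp only [Pi.basisFun_repr, Set.mem_range, algebraMap_int_eq, eq_intCast]
  exact exists_congr fun m => eq_comm

theorem exists_adapted_basis {n : ℕ} (G : Set (Fin n → ℝ)) (hG : G ⊆ intPts n) :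
    ∃ (b : Module.Basis (Fin n) ℝ (Fin n → ℝ)) (k : ℕ) (f : Fin k ↪ Fin n),
      (∀ i, b i ∈ intPts n) ∧ (∀ x ∈ intPts n, ∀ i, ∃ m : ℤ, b.repr x i = m) ∧
      Submodule.span ℝ G = Submodule.span ℝ (Set.range (b ∘ f)) := by
  let L : Submodule ℤ (Fin n → ℝ) := Submodule.span ℤ (Set.range (Pi.basisFun ℝ (Fin n)))
  let b0 : Module.Basis (Fin n) ℤ L := (Pi.basisFun ℝ (Fin n)).restrictScalars ℤ
  let N : Submodule ℤ L := Submodule.span ℤ {x : L | (x : Fin n → ℝ) ∈ G}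
  obtain ⟨k, snf⟩ := N.smithNormalForm b0
  let b := snf.bM.ofZLatticeBasis ℝ L
  have hb : ∀ i, b i = snf.bM i := fun i => snf.bM.ofZLatticeBasis_apply ℝ L i
  refine ⟨b, k, snf.f, fun i => ?_, fun x hx i => ?_, ?_⟩
  · rw [hb, ← mem_span_basisFun_iff]
    exact (snf.bM i).2
  · have := snf.bM.ofZLatticeBasis_repr_apply ℝ L ⟨x, (mem_span_basisFun_iff x).2 hx⟩ i
    exact ⟨_, this⟩
  · have hN : ∀ x : L, x ∈ N → (x : Fin n → ℝ) ∈ Submodule.span ℝ G := by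
      intro x hx
      induction hx using Submodule.span_induction with
      | mem x hx => exact Submodule.subset_span hx
      | zero => exact Submodule.zero_mem _
      | add x y _ _ hx hy => exact Submodule.add_mem _ hx hy
      | smul m x _ hx =>
        have := Submodule.smul_mem _ (m : ℝ) hx
        rwa [Int.cast_smul_eq_zsmul] at this
    apply le_antisymm
    · rw [Submodule.span_le]
      intro x hx
      let y : N := ⟨⟨x, (mem_span_basisFun_iff x).2 (hG hx)⟩, Submodule.subset_span hx⟩
      have hy : x = ∑ i, ((snf.bN.repr y i : ℤ) : ℝ) • ((snf.bN i : L) : Fin n → ℝ) := by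
        have := congrArg (fun z : N => ((z : L) : Fin n → ℝ)) (snf.bN.sum_repr y)
        simp only [Submodule.coe_sum, Submodule.coe_smul] at this
        simp only [Int.cast_smul_eq_zsmul]
        exact this.symm
      rw [hy]
      refine Submodule.sum_mem _ fun i _ => Submodule.smul_mem _ _ ?_
      rw [snf.snf i, Submodule.coe_smul, ← Int.cast_smul_eq_zsmul ℝ, ← hb]
      exact Submodule.smul_mem _ _ (Submodule.subset_span ⟨i, rfl⟩)
    · rw [Submodule.span_le]
      rintro _ ⟨i, rfl⟩
      have ha : snf.a i ≠ 0 := fun h0 => by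
        have h1 := snf.snf i
        rw [h0, zero_smul] at h1
        exact snf.bN.ne_zero i (Subtype.ext h1)
      have h1 := hN _ (snf.bN i).2
      rw [snf.snf i, Submodule.coe_smul, ← Int.cast_smul_eq_zsmul ℝ, ← hb] at h1
      have := Submodule.smul_mem _ ((snf.a i : ℝ)⁻¹) h1
      rwa [inv_smul_smul₀ (by exact_mod_cast ha)] at this

/-- A linear map between real vector spaces with standard lattices which respects the lattices. -/
def IsIntegralMap {n m : ℕ} (f : (Fin n → ℝ) →ₗ[ℝ] (Fin m → ℝ)) : Prop :=
  ∀ x ∈ intPts n, f x ∈ intPts m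

/-- Splitting of the lattice `ℤ^n` along the saturation of the sublattice generated by `G`. -/
theorem exists_splitting {n : ℕ} (G : Set (Fin n → ℝ)) (hG : G ⊆ intPts n) :
    ∃ (k j : ℕ) (π : (Fin n → ℝ) →ₗ[ℝ] (Fin j → ℝ)) (s : (Fin j → ℝ) →ₗ[ℝ] (Fin n → ℝ))
      (r : (Fin n → ℝ) →ₗ[ℝ] (Fin k → ℝ)) (ι : (Fin k → ℝ) →ₗ[ℝ] (Fin n → ℝ)),
      k + j = n ∧ IsIntegralMap π ∧ IsIntegralMap s ∧ IsIntegralMap r ∧ IsIntegralMap ι ∧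
      (∀ y, π (s y) = y) ∧ (∀ y, r (ι y) = y) ∧ (∀ y, π (ι y) = 0) ∧
      (∀ x, ι (r x) + s (π x) = x) ∧ LinearMap.ker π = Submodule.span ℝ G := by
  classical
  obtain ⟨b, k, f, hb, hbr, hspan⟩ := exists_adapted_basis G hG
  let e' : Fin k ≃ Set.range f := Equiv.ofInjective f f.injective
  have hcard : Fintype.card ((Set.range f)ᶜ : Set (Fin n)) = n - k := by
    rw [Fintype.card_compl_set, Fintype.card_fin, Set.card_range_of_injective f.injective,
      Fintype.card_fin]
  let e'' : Fin (n - k) ≃ ((Set.range f)ᶜ : Set (Fin n)) := (Fintype.equivFinOfCardEq hcard).symm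
  have hkn : k ≤ n := by simpa using Fintype.card_le_of_embedding f
  let e : Fin n ≃ Fin k ⊕ Fin (n - k) :=
    ((Equiv.sumCongr e' e'').trans (Equiv.Set.sumCompl (Set.range f))).symm
  let B := b.reindex e
  have hBl : ∀ i, B (Sum.inl i) = b (f i) := fun i => by simp [B, e, e']
  have hB : ∀ i, B i ∈ intPts n := fun i => by simpa [B] using hb _
  have hBr : ∀ x ∈ intPts n, ∀ i, ∃ m : ℤ, B.repr x i = m := fun x hx i => by
    simpa [B] using hbr x hx _
  let π : (Fin n → ℝ) →ₗ[ℝ] (Fin (n - k) → ℝ) := LinearMap.pi fun i => B.coord (Sum.inr i)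
  let r : (Fin n → ℝ) →ₗ[ℝ] (Fin k → ℝ) := LinearMap.pi fun i => B.coord (Sum.inl i)
  let s : (Fin (n - k) → ℝ) →ₗ[ℝ] (Fin n → ℝ) :=
    Fintype.linearCombination ℝ fun i => B (Sum.inr i)
  let ι : (Fin k → ℝ) →ₗ[ℝ] (Fin n → ℝ) := Fintype.linearCombination ℝ fun i => B (Sum.inl i)
  have hs : ∀ y, s y = ∑ i, y i • B (Sum.inr i) := fun y => rfl
  have hι : ∀ y, ι y = ∑ i, y i • B (Sum.inl i) := fun y => rfl
  have hsum : ∀ x, ι (r x) + s (π x) = x := fun x => by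
    have := B.sum_repr x
    rw [Fintype.sum_sum_type] at this
    rw [hs, hι]
    exact this
  have hπι : ∀ y, π (ι y) = 0 := fun y => by
    ext i
    simp [π, hι]
  refine ⟨k, n - k, π, s, r, ι, by omega, fun x hx i => hBr x hx _, fun y hy => ?_,
    fun x hx i => hBr x hx _, fun y hy => ?_, fun y => ?_, fun y => ?_, hπι, hsum, ?_⟩
  · rw [hs]
    refine intPts_sum _ _ fun i _ => ?_
    obtain ⟨m, hm⟩ := hy i
    rw [hm]
    exact intPts_zsmul m (hB _)
  · rw [hι]
    refine intPts_sum _ _ fun i _ => ?_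
    obtain ⟨m, hm⟩ := hy i
    rw [hm]
    exact intPts_zsmul m (hB _)
  · ext i
    simp [π, hs, Finsupp.single_apply]
  · ext i
    simp [r, hι, Finsupp.single_apply]
  · rw [hspan]
    apply le_antisymm
    · intro x hx
      rw [LinearMap.mem_ker] at hx
      rw [← hsum x, hx, map_zero, add_zero, hι]
      refine Submodule.sum_mem _ fun i _ => Submodule.smul_mem _ _ (Submodule.subset_span ⟨i, ?_⟩)
      rw [hBl]; rfl
    · rw [Submodule.span_le]
      rintro _ ⟨i, rfl⟩
      have := hπι (Pi.single i 1)
      rw [hι] at this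
      simpa [Pi.single_apply, hBl] using this

open MeasureTheory in
theorem volume_corner_simplex (j : ℕ) :
    ENNReal.ofReal (1 / (j.factorial : ℕ)) ≤
      volume {x : Fin j → ℝ | (∀ i, 0 ≤ x i) ∧ ∑ i, x i < 1} := by
  set Δ := {x : Fin j → ℝ | (∀ i, 0 ≤ x i) ∧ ∑ i, x i < 1} with hΔ
  let R : (Fin j → Bool) → (Fin j → ℝ) → (Fin j → ℝ) := fun ε x i =>
    (if ε i then id else fun t : ℝ => -t) (x i)
  have hR : ∀ ε, MeasurePreserving (R ε) volume volume := fun ε => by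
    refine volume_preserving_pi fun i => ?_
    split_ifs
    · exact MeasurePreserving.id _
    · exact Measure.measurePreserving_neg volume
  have hΔm : MeasurableSet Δ := by
    refine MeasurableSet.inter ?_ ?_
    · exact (isClosed_Ici (a := (0 : Fin j → ℝ))).measurableSet
    · exact (isOpen_lt (f := fun x : Fin j → ℝ => ∑ i, x i) (g := fun _ => 1) (by fun_prop)
        continuous_const).measurableSet
  have hcov : {x : Fin j → ℝ | ∑ i, |x i| ^ (1 : ℝ) < 1} ⊆
      ⋃ ε ∈ (Finset.univ : Finset (Fin j → Bool)), R ε ⁻¹' Δ := by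
    intro x hx
    simp only [Real.rpow_one, Set.mem_ofPred_eq] at hx
    simp only [Finset.mem_univ, Set.iUnion_true, Set.mem_iUnion]
    refine ⟨fun i => decide (0 ≤ x i), ?_⟩
    have : R (fun i => decide (0 ≤ x i)) x = fun i => |x i| := by
      ext i
      by_cases h : 0 ≤ x i
      · simp [R, h, abs_of_nonneg h]
      · simp [R, h, abs_of_neg (not_le.1 h)]
    rw [Set.mem_preimage, this]
    exact ⟨fun i => abs_nonneg _, hx⟩
  have h1 := (measure_mono (μ := volume) hcov).trans (measure_biUnion_finset_le _ _)
  rw [MeasureTheory.volume_sum_rpow_lt_one _ le_rfl] at h1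
  simp only [(hR _).measure_preimage hΔm.nullMeasurableSet, Finset.sum_const, Finset.card_univ,
    Fintype.card_pi, Fintype.card_bool, Finset.prod_const, Fintype.card_fin, nsmul_eq_mul,
    div_one, Real.Gamma_nat_eq_factorial] at h1
  norm_num at h1
  rw [ENNReal.ofReal_div_of_pos (by positivity), ENNReal.ofReal_pow (by norm_num),
    ENNReal.ofReal_ofNat, ENNReal.div_le_iff_le_mul (by simp [Nat.factorial_ne_zero]) (by simp),
    mul_assoc] at h1
  nth_rewrite 1 [← mul_one ((2 : ENNReal) ^ j)] at h1
  rw [ENNReal.mul_le_mul_iff_right (by simp) (by simp)] at h1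
  rwa [ENNReal.ofReal_div_of_pos (by positivity), ENNReal.ofReal_one,
    ENNReal.div_le_iff_le_mul (by simp [Nat.factorial_ne_zero]) (by simp)]

open MeasureTheory in
theorem abs_det_le_of_packing {j : ℕ} {S : Set (Fin j → ℝ)} (hS : Convex ℝ S)
    (hpack : ∀ y ∈ intPts j, ∀ u ∈ S, ∀ v ∈ S, y = u - v → y = 0)
    (v : Fin j → Fin j → ℝ) (hv : ∀ i, v i ∈ S) (p : Fin j → ℝ) (hp : p ∈ S) :
    |(Matrix.of fun i => v i - p).det| ≤ (j.factorial : ℕ) := by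
  have hvol : volume S ≤ 1 := by
    by_contra! hlt
    have hfund := ZSpan.isAddFundamentalDomain' (Pi.basisFun ℝ (Fin j)) volume
    have hF : volume (ZSpan.fundamentalDomain (Pi.basisFun ℝ (Fin j))) = 1 := by
      rw [ZSpan.fundamentalDomain_pi_basisFun]
      simp [Real.volume_pi_Ico]
    have : Countable (Submodule.span ℤ (Set.range (Pi.basisFun ℝ (Fin j)))).toAddSubgroup :=
      inferInstanceAs (Countable (Submodule.span ℤ (Set.range (Pi.basisFun ℝ (Fin j)))))
    obtain ⟨x, y, hxy, hd⟩ := exists_pair_mem_lattice_not_disjoint_vadd hfund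
      (hS.nullMeasurableSet volume) (hF ▸ hlt)
    rw [Set.not_disjoint_iff] at hd
    obtain ⟨z, ⟨u, hu, rfl⟩, ⟨w, hw, hz⟩⟩ := hd
    have h0 := hpack ((x : Fin j → ℝ) - y) (intPts_sub ((mem_span_basisFun_iff _).1 x.2)
      ((mem_span_basisFun_iff _).1 y.2)) w hw u hu (by
        have : (y : Fin j → ℝ) + w = x + u := hz
        rw [sub_eq_sub_iff_add_eq_add, ← this]; abel)
    exact hxy (Subtype.ext (sub_eq_zero.1 h0))
  set A := Matrix.of fun i => v i - p with hA
  let Δ := {x : Fin j → ℝ | (∀ i, 0 ≤ x i) ∧ ∑ i, x i < 1}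
  have hsub : (fun y => p + y) '' (Matrix.toLin' A.transpose '' Δ) ⊆ S := by
    rintro _ ⟨_, ⟨x, ⟨hx0, hx1⟩, rfl⟩, rfl⟩
    have hmul : Matrix.toLin' A.transpose x = ∑ i, x i • (v i - p) := by
      ext k
      simp [hA, Matrix.mulVec, dotProduct, mul_comm]
    have h2 := hS.sum_mem (t := Finset.univ) (w := fun o : Option (Fin j) =>
      o.elim (1 - ∑ i, x i) x) (z := fun o : Option (Fin j) => o.elim p v)
      (by rintro (_ | i) _ <;> simp [hx1.le, hx0]) (by simp [Fintype.sum_option])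
      (by rintro (_ | i) _ <;> simp [hp, hv])
    simp only [Fintype.sum_option, Option.elim] at h2
    dsimp only
    rw [hmul]
    convert h2 using 1
    simp only [smul_sub, Finset.sum_sub_distrib, ← Finset.sum_smul, sub_smul, one_smul]
    abel
  have h1 := measure_mono (μ := volume) hsub
  rw [Set.image_add_left, measure_preimage_add, Measure.addHaar_image_linearMap,
    LinearMap.det_toLin', Matrix.det_transpose] at h1
  have h2 := (mul_le_mul_right (volume_corner_simplex j) (ENNReal.ofReal |A.det|)).trans
    (h1.trans hvol)
  rw [← ENNReal.ofReal_mul (abs_nonneg _), ENNReal.ofReal_le_one, mul_one_div,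
    div_le_one (by positivity)] at h2
  exact h2

/-- `b • (π K° - π K°)` contains no nonzero lattice point. -/
def IsPacking {n j : ℕ} (K : Set (Fin n → ℝ)) (π : (Fin n → ℝ) →ₗ[ℝ] (Fin j → ℝ)) (b : ℝ) :
    Prop :=
  ∀ y ∈ intPts j, ∀ u ∈ interior K, ∀ v ∈ interior K, y = b • (π u - π v) → y = 0

theorem IsPacking.abs_det_le {n j : ℕ} {K : Set (Fin n → ℝ)}
    {π : (Fin n → ℝ) →ₗ[ℝ] (Fin j → ℝ)} {b : ℝ} (h : IsPacking K π b) (hb : 0 < b)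
    (hK : Convex ℝ K) (hne : (interior K).Nonempty) (v : Fin j → Fin n → ℝ)
    (hv : ∀ i, v i ∈ K) (p : Fin n → ℝ) (hp : p ∈ K) :
    |(Matrix.of fun i => π (v i) - π p).det| ≤ (j.factorial : ℕ) / b ^ j := by
  obtain ⟨o, ho⟩ := hne
  rw [le_div_iff₀ (by positivity)]
  have key : ∀ t ∈ Set.Ico (0 : ℝ) 1,
      |(Matrix.of fun i => π (v i) - π p).det| * (t * b) ^ j ≤ (j.factorial : ℕ) := by
    rintro t ⟨ht0, ht1⟩
    have hmem : ∀ x ∈ K, (1 - t) • o + t • x ∈ interior K := fun x hx =>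
      hK.combo_interior_self_mem_interior ho hx (by linarith) ht0 (by ring)
    have hS : Convex ℝ ((b • π) '' interior K) := hK.interior.linear_image _
    have := abs_det_le_of_packing hS (by
        rintro y hy _ ⟨u, hu, rfl⟩ _ ⟨w, hw, rfl⟩ hyu
        exact h y hy u hu w hw (by simpa [smul_sub] using hyu))
      (fun i => (b • π) ((1 - t) • o + t • v i)) (fun i => ⟨_, hmem _ (hv i), rfl⟩)
      ((b • π) ((1 - t) • o + t • p)) ⟨_, hmem _ hp, rfl⟩
    have he : (Matrix.of fun i => (b • π) ((1 - t) • o + t • v i) -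
        (b • π) ((1 - t) • o + t • p)) = (t * b) • Matrix.of fun i => π (v i) - π p := by
      ext i k
      simp
      ring
    rw [he, Matrix.det_smul, Fintype.card_fin, abs_mul,
      abs_of_nonneg (pow_nonneg (mul_nonneg ht0 hb.le) j)] at this
    linarith
  have hlim : Filter.Tendsto (fun t : ℝ => |(Matrix.of fun i => π (v i) - π p).det| * (t * b) ^ j)
      (nhdsWithin 1 (Set.Iio 1)) (nhds (|(Matrix.of fun i => π (v i) - π p).det| * (1 * b) ^ j)) :=
    (Continuous.tendsto (by fun_prop) 1).mono_left nhdsWithin_le_nhds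
  rw [one_mul] at hlim
  refine le_of_tendsto hlim ?_
  filter_upwards [Ico_mem_nhdsLT (show (0 : ℝ) < 1 by norm_num)] with t ht using key t ht

/-- An integral surjection with an integral section. -/
def IsSplitMap {n j : ℕ} (π : (Fin n → ℝ) →ₗ[ℝ] (Fin j → ℝ)) : Prop :=
  IsIntegralMap π ∧ ∃ s : (Fin j → ℝ) →ₗ[ℝ] (Fin n → ℝ), IsIntegralMap s ∧ ∀ y, π (s y) = y

theorem IsSplitMap.comp {n m j : ℕ} {ρ : (Fin m → ℝ) →ₗ[ℝ] (Fin j → ℝ)}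
    {π : (Fin n → ℝ) →ₗ[ℝ] (Fin m → ℝ)} (hρ : IsSplitMap ρ) (hπ : IsSplitMap π) :
    IsSplitMap (ρ ∘ₗ π) := by
  obtain ⟨h1, s, hs, hs'⟩ := hρ
  obtain ⟨h2, t, ht, ht'⟩ := hπ
  exact ⟨fun x hx => h1 _ (h2 x hx), t ∘ₗ s, fun x hx => ht _ (hs x hx),
    fun y => by simp [hs', ht']⟩

/-- Either some split quotient of rank at most `j` has the packing property, or the dilates of
`π K°` by the partial sums of the packing constants cover modulo the lattice. -/
theorem exists_packing_or_cover {n : ℕ} {K : Set (Fin n → ℝ)} (hK : Convex ℝ K)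
    (hne : (interior K).Nonempty) (b : ℕ → ℝ) (hb : ∀ i, 0 < b (i + 1)) (j : ℕ)
    (π : (Fin n → ℝ) →ₗ[ℝ] (Fin j → ℝ)) (hπ : IsSplitMap π) :
    (∃ i, 1 ≤ i ∧ i ≤ j ∧ ∃ π' : (Fin n → ℝ) →ₗ[ℝ] (Fin i → ℝ), IsSplitMap π' ∧
      IsPacking K π' (b i)) ∨
    ∀ p : Fin j → ℝ, ∃ x ∈ interior K, ∃ y ∈ intPts j,
      p = (∑ i ∈ Finset.range j, b (i + 1)) • π x + y := by
  induction j with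
  | zero =>
    obtain ⟨o, ho⟩ := hne
    exact Or.inr fun p => ⟨o, ho, 0, intPts_zero, Subsingleton.elim _ _⟩
  | succ j ih =>
    by_cases hpack : IsPacking K π (b (j + 1))
    · exact Or.inl ⟨j + 1, by omega, le_rfl, π, hπ, hpack⟩
    unfold IsPacking at hpack
    push Not at hpack
    obtain ⟨z, hz, k1, hk1, k2, hk2, hzk, hz0⟩ := hpack
    obtain ⟨k, j', ρ, s, r, ι, hkj, hρ, hs, hr, hι, hρs, hrι, hρι, hsum, hker⟩ :=
      exists_splitting {z} (by simpa using hz)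
    have hk : k = 1 := by
      have h1 := LinearMap.finrank_range_add_finrank_ker ρ
      rw [hker, finrank_span_singleton hz0, LinearMap.range_eq_top.2 fun y => ⟨s y, hρs y⟩] at h1
      simp at h1
      omega
    obtain rfl : j' = j := by omega
    rcases ih (ρ ∘ₗ π) (IsSplitMap.comp ⟨hρ, s, hs, hρs⟩ hπ) with ⟨i, h1, h2, h⟩ | hcov
    · exact Or.inl ⟨i, h1, by omega, h⟩
    refine Or.inr fun p => ?_
    set B := b (j' + 1) with hB
    set t := ∑ i ∈ Finset.range j', b (i + 1) with ht
    have ht0 : 0 ≤ t := Finset.sum_nonneg fun i _ => (hb _).le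
    obtain ⟨x, hx, y, hy, hp⟩ := hcov (ρ (p - B • π k2))
    have hmem : p - B • π k2 - t • π x - s y ∈ LinearMap.ker ρ := by
      rw [LinearMap.mem_ker, map_sub, map_sub, hp, hρs, map_smul]
      simp
    rw [hker, Submodule.mem_span_singleton] at hmem
    obtain ⟨c, hc⟩ := hmem
    have hcc : c • z = Int.fract c • (B • (π k1 - π k2)) + (⌊c⌋ : ℝ) • z := by
      rw [← hzk, ← add_smul, Int.fract_add_floor]
    have hconv : (1 - Int.fract c) • k2 + Int.fract c • k1 ∈ interior K :=
      hK.interior hk2 hk1 (by linarith [Int.fract_lt_one c]) (Int.fract_nonneg c) (by ring)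
    have htB : 0 < t + B := by have := hb j'; positivity
    refine ⟨(t / (t + B)) • x + (B / (t + B)) • ((1 - Int.fract c) • k2 + Int.fract c • k1),
      hK.interior hx hconv (by positivity) (div_nonneg (hb _).le htB.le) (by field_simp),
      s y + (⌊c⌋ : ℝ) • z, intPts_add (hs y hy) (intPts_zsmul _ hz), ?_⟩
    rw [Finset.sum_range_succ]
    simp only [map_add, map_smul, smul_add, smul_smul]
    rw [← ht, ← hB, ← mul_assoc, ← mul_assoc, mul_div_cancel₀ _ htB.ne', mul_div_cancel₀ _ htB.ne']
    have : p = B • π k2 + t • π x + s y + c • z := by rw [hc]; abel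
    rw [this, hcc]
    module

/-- A convex body whose dilate by `a` has no interior lattice point has a split quotient with a
quantitative packing property. -/
theorem exists_packing {n : ℕ} (hn : 1 ≤ n) {K : Set (Fin n → ℝ)} (hK : Convex ℝ K)
    (hne : (interior K).Nonempty) {a : ℝ} (ha : 0 < a)
    (hlat : ∀ y ∈ intPts n, y ∉ a • interior K) :
    ∃ j, 1 ≤ j ∧ j ≤ n ∧ ∃ π : (Fin n → ℝ) →ₗ[ℝ] (Fin j → ℝ), IsSplitMap π ∧
      IsPacking K π ((2 * (j : ℝ) - 1) * a / (n : ℝ) ^ 2) := by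
  have hn0 : (0 : ℝ) < n := by exact_mod_cast hn
  have hsum : ∀ m : ℕ, ∑ i ∈ Finset.range m, (2 * ((i + 1 : ℕ) : ℝ) - 1) * a / (n : ℝ) ^ 2
      = (m : ℝ) ^ 2 * a / (n : ℝ) ^ 2 := fun m => by
    induction m with
    | zero => simp
    | succ m ih =>
      rw [Finset.sum_range_succ, ih]
      push_cast
      ring
  rcases exists_packing_or_cover hK hne (fun j => (2 * (j : ℝ) - 1) * a / (n : ℝ) ^ 2)
    (fun i => by
      have : (0 : ℝ) < 2 * ((i + 1 : ℕ) : ℝ) - 1 := by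
        push_cast
        have : (0 : ℝ) ≤ i := by positivity
        linarith
      positivity) n LinearMap.id
    ⟨fun x hx => hx, LinearMap.id, fun x hx => hx, fun y => rfl⟩ with h | h
  · exact h
  · obtain ⟨x, hx, y, hy, h0⟩ := h 0
    rw [hsum, mul_div_cancel_left₀ _ (by positivity)] at h0
    exact absurd ⟨x, hx, eq_neg_of_add_eq_zero_left h0.symm⟩ (hlat (-y) (intPts_neg hy))

theorem exists_max_nat {α : Type*} (P : α → Prop) (m : α → ℕ) (N : ℕ) (hN : ∀ x, m x ≤ N)
    (hP : ∃ x, P x) : ∃ x, P x ∧ ∀ y, P y → m y ≤ m x := by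
  obtain ⟨x, hx, hmin⟩ := (measure fun x => N - m x).wf.has_min {x | P x} hP
  refine ⟨x, hx, fun y hy => ?_⟩
  have h1 := hmin y hy
  have h2 := hN y
  have h3 := hN x
  have h1 : ¬ (N - m y < N - m x) := h1
  omega

theorem ncard_lt_of_step {V : Type*} [AddCommGroup V] [Module ℝ V] {T : Set V} (hT : T.Finite)
    {f g : V →ₗ[ℝ] ℝ} (h : ∀ v ∈ T, f v = 0 → g v = 0) (hn : ∃ v ∈ T, f v ≠ 0 ∧ g v = 0) :
    (T ∩ {v | f v = 0}).ncard < (T ∩ {v | g v = 0}).ncard := by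
  refine Set.ncard_lt_ncard ?_ (hT.subset Set.inter_subset_left)
  refine ⟨fun v hv => ⟨hv.1, h v hv.1 hv.2⟩, fun hsub => ?_⟩
  obtain ⟨v, hv, hf, hg⟩ := hn
  exact hf (hsub ⟨hv, hg⟩).2

/-- A full-dimensional finitely generated cone which is not the whole space has a facet. -/
theorem exists_facet {j : ℕ} {S : Set (Fin j → ℝ)} (hS : S.Finite)
    (hspan : Submodule.span ℝ S = ⊤) (hne : coneHull S ≠ Set.univ) :
    ∃ (E : Fin j → Fin j → ℝ) (i0 : Fin j) (f : (Fin j → ℝ) →ₗ[ℝ] ℝ), (∀ i, E i ∈ S) ∧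
      LinearIndependent ℝ E ∧ (∀ v ∈ S, 0 ≤ f v) ∧ 0 < f (E i0) ∧ ∀ i, i ≠ i0 → f (E i) = 0 := by
  classical
  obtain ⟨p, hp⟩ := (Set.ne_univ_iff_exists_notMem _).1 hne
  obtain ⟨f0, hf0, hf0p⟩ := farkas hS hp
  obtain ⟨f, ⟨hf0, hf⟩, hmax⟩ := exists_max_nat
    (fun f : (Fin j → ℝ) →ₗ[ℝ] ℝ => f ≠ 0 ∧ ∀ v ∈ S, 0 ≤ f v)
    (fun f => (S ∩ {v | f v = 0}).ncard) S.ncard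
    (fun f => Set.ncard_le_ncard Set.inter_subset_left hS)
    ⟨f0, fun h => by simp [h] at hf0p, hf0⟩
  obtain ⟨b1, hb1A, hb1span, hb1⟩ := exists_linearIndependent ℝ (S ∩ {v | f v = 0})
  obtain ⟨b, hbS, hb1b, hSb, hb⟩ := exists_linearIndepOn_id_extension hb1
    (hb1A.trans Set.inter_subset_left)
  have hspan' : ⊤ ≤ Submodule.span ℝ (Set.range fun i : b => (id i : Fin j → ℝ)) := by
    rw [← hspan, Submodule.span_le]
    simpa using hSb
  let bas := Module.Basis.mk hb hspan'
  have hbas : ∀ i, bas i = i := fun i => by simp [bas]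
  have : Fintype b := (hS.subset hbS).fintype
  have hcard : Fintype.card b = j := by
    rw [← Module.finrank_eq_card_basis bas]; simp
  have hex : ∃ e : b, f e ≠ 0 := by
    by_contra! h
    exact hf0 (bas.ext fun i => by rw [hbas, h]; rfl)
  obtain ⟨e1, he1⟩ := hex
  have hpos : ∀ e : b, f e ≠ 0 → 0 < f e := fun e he => lt_of_le_of_ne (hf _ (hbS e.2)) he.symm
  have hcoord : ∀ e : b, f e ≠ 0 → ∀ v ∈ S, f v = 0 → bas.coord e v = 0 := by
    intro e he v hv hfv
    have h1 : v ∈ Submodule.span ℝ b1 := hb1span ▸ Submodule.subset_span ⟨hv, hfv⟩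
    have h2 : Submodule.span ℝ b1 ≤ LinearMap.ker (bas.coord e) := by
      rw [Submodule.span_le]
      intro w hw
      have hwb : w = bas ⟨w, hb1b hw⟩ := (hbas ⟨w, hb1b hw⟩).symm
      rw [SetLike.mem_coe, LinearMap.mem_ker, hwb, bas.coord_apply, bas.repr_self,
        Finsupp.single_eq_of_ne]
      rintro rfl
      exact he (hb1A hw).2
    exact h2 h1
  have huniq : ∀ e : b, e ≠ e1 → f e = 0 := by
    intro e2 h21
    by_contra he2
    have h1 := hpos _ he1
    have h2 := hpos _ he2
    let η := (f e2) • bas.coord e1 - (f e1) • bas.coord e2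
    have hη1 : η e1 = f e2 := by
      have : ((e1 : b) : Fin j → ℝ) = bas e1 := (hbas _).symm
      simp [η, this, Finsupp.single_eq_of_ne h21]
    have hη2 : η e2 = -f e1 := by
      have : ((e2 : b) : Fin j → ℝ) = bas e2 := (hbas _).symm
      simp [η, this, Finsupp.single_eq_of_ne h21.symm]
    have hηA : ∀ v ∈ S, f v = 0 → η v = 0 := fun v hv hfv => by
      simp only [η, LinearMap.sub_apply, LinearMap.smul_apply, hcoord _ he1 v hv hfv,
        hcoord _ he2 v hv hfv, smul_zero, sub_zero]
    obtain ⟨s, hs, hs1, v, hv, hvn, hv0⟩ := exists_step hS f η hf hηA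
      ⟨e2, hbS e2.2, by rw [hη2]; linarith⟩
    have hlt := ncard_lt_of_step hS (f := f) (g := f + s • η)
      (fun v hv hfv => by simp [hfv, hηA v hv hfv])
      ⟨v, hv, fun h => hvn.ne (hηA v hv h), by simpa using hv0⟩
    have hle := hmax (f + s • η) ⟨fun h => ?_, fun v hv => by simpa using hs1 v hv⟩
    · omega
    · have := congrArg (fun g => g (e1 : Fin j → ℝ)) h
      simp only [LinearMap.add_apply, LinearMap.smul_apply, hη1, smul_eq_mul,
        LinearMap.zero_apply] at this
      nlinarith [mul_pos hs h2]
  let e : Fin j ≃ b := (Fintype.equivFinOfCardEq hcard).symm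
  refine ⟨fun i => e i, e.symm e1, f, fun i => hbS (e i).2, LinearIndependent.comp hb e e.injective,
    hf, by simpa using hpos _ he1, fun i hi => huniq _ fun h => hi (by simp [← h])⟩

theorem IsSplitMap.span_image_eq_top {n j : ℕ} {π : (Fin n → ℝ) →ₗ[ℝ] (Fin j → ℝ)}
    (hπ : IsSplitMap π) {T : Set (Fin n → ℝ)} (hT : Submodule.span ℝ T = ⊤) :
    Submodule.span ℝ (π '' T) = ⊤ := by
  obtain ⟨-, s, -, hs⟩ := hπ
  rw [Submodule.span_image, hT, Submodule.map_top]
  exact LinearMap.range_eq_top.2 fun y => ⟨s y, hs y⟩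

/-- The case where the cone generated by the projection is not the whole space. -/
theorem exists_functional_of_facet {n j : ℕ} {K : Set (Fin n → ℝ)} (hK : Convex ℝ K)
    (hKc : IsCompact K) (hK0 : 0 ∈ K) (hne : (interior K).Nonempty)
    (hKT : K ⊆ coneHull (intPts n ∩ K)) {π : (Fin n → ℝ) →ₗ[ℝ] (Fin j → ℝ)} {b : ℝ}
    (hπ : IsSplitMap π) (hb : 0 < b) (hpack : IsPacking K π b)
    (hspan : Submodule.span ℝ (intPts n ∩ K) = ⊤)
    (hcone : coneHull (π '' (intPts n ∩ K)) ≠ Set.univ) :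
    ∃ Φ : (Fin n → ℝ) →ₗ[ℝ] ℝ, Φ ≠ 0 ∧ (∀ y ∈ intPts n, ∃ m : ℤ, Φ y = m) ∧
      ∀ k ∈ K, 0 ≤ Φ k ∧ Φ k ≤ (j.factorial : ℕ) / b ^ j := by
  classical
  obtain ⟨E, i0, f, hES, hE, hf, hf0, hfi⟩ := exists_facet
    ((finite_intPts_inter hKc).image π) (hπ.span_image_eq_top hspan) hcone
  choose e he heE using hES
  have hEint : ∀ i, E i ∈ intPts j := fun i => heE i ▸ hπ.1 _ (he i).1
  have : Nonempty (Fin j) := ⟨i0⟩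
  let bas := basisOfLinearIndependentOfCardEqFinrank hE (by simp)
  have hbas : ∀ i, bas i = E i := fun i => by simp [bas]
  have hrep : ∀ x, ∑ i, bas.repr x i • E i = x := fun x => by
    simpa [hbas] using bas.sum_repr x
  have hdet : ∀ x, (Matrix.of E).det * bas.repr x i0 =
      (Matrix.of (Function.update E i0 x)).det := by
    intro x
    have := Matrix.det_updateRow_sum (Matrix.of E) i0 (bas.repr x)
    rw [smul_eq_mul, mul_comm] at this
    rw [← this]
    congr 2
    exact hrep x
  have hfc : ∀ x, f x = bas.repr x i0 * f (E i0) := fun x => by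
    conv_lhs => rw [← hrep x]
    rw [map_sum, Finset.sum_eq_single i0 (fun i _ hi => by simp [hfi i hi]) (by simp)]
    simp
  have hD := det_ne_zero_of_linearIndependent hE
  set D := (Matrix.of E).det with hDdef
  have hΦ : ∀ x, (|D| • (bas.coord i0 ∘ₗ π)) x = |D| * bas.repr (π x) i0 := fun x => by simp
  have hnn : ∀ k ∈ K, 0 ≤ bas.repr (π k) i0 := fun k hk => by
    have h1 : 0 ≤ (f ∘ₗ π) k := nonneg_of_mem_coneHull _
      (fun v hv => hf (π v) ⟨v, hv, rfl⟩) (hKT hk)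
    rw [LinearMap.comp_apply, hfc] at h1
    exact nonneg_of_mul_nonneg_left h1 hf0
  refine ⟨|D| • (bas.coord i0 ∘ₗ π), fun h0 => ?_, fun y hy => ?_, fun k hk => ⟨?_, ?_⟩⟩
  · have := hΦ (e i0)
    rw [h0, heE, ← hbas, bas.repr_self] at this
    simp only [LinearMap.zero_apply, Finsupp.single_eq_same, mul_one] at this
    exact hD (abs_eq_zero.1 this.symm)
  · rw [hΦ]
    obtain ⟨m, hm⟩ := det_mul_coord_int E hEint (bas.repr (π y)) (by
      rw [hrep]; exact hπ.1 y hy) i0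
    rcases abs_choice D with h | h
    · exact ⟨m, by rw [h]; exact hm⟩
    · exact ⟨-m, by rw [h]; push_cast; rw [← hm]; ring⟩
  · rw [hΦ]
    exact mul_nonneg (abs_nonneg _) (hnn k hk)
  · rw [hΦ, ← abs_of_nonneg (hnn k hk), ← abs_mul, hdet]
    have := hpack.abs_det_le hb hK hne (Function.update e i0 k) (fun i => by
      by_cases h : i = i0
      · subst h; simpa using hk
      · simpa [h] using (he i).2) 0 hK0
    have heq : Function.update E i0 (π k) = fun i => π (Function.update e i0 k i) - π 0 := by
      funext i
      by_cases h : i = i0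
      · subst h; simp
      · simp [h, heE]
    rwa [heq]

theorem IsSplitMap.exists_kernel {n j : ℕ} {π : (Fin n → ℝ) →ₗ[ℝ] (Fin j → ℝ)}
    (hπ : IsSplitMap π) :
    ∃ (k : ℕ) (r : (Fin n → ℝ) →ₗ[ℝ] (Fin k → ℝ)) (ι : (Fin k → ℝ) →ₗ[ℝ] (Fin n → ℝ)),
      k + j = n ∧ IsIntegralMap r ∧ IsIntegralMap ι ∧ (∀ y, r (ι y) = y) ∧ (∀ y, π (ι y) = 0) ∧
      ∀ x, π x = 0 → ι (r x) = x := by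
  obtain ⟨hInt, s, hs, hπs⟩ := hπ
  let G : Set (Fin n → ℝ) := Set.range fun i => Pi.single i 1 - s (π (Pi.single i 1))
  have hG : G ⊆ intPts n := by
    rintro _ ⟨i, rfl⟩
    exact intPts_sub (intPts_single i) (hs _ (hInt _ (intPts_single i)))
  have hker : Submodule.span ℝ G = LinearMap.ker π := by
    refine le_antisymm (Submodule.span_le.2 ?_) fun x hx => ?_
    · rintro _ ⟨i, rfl⟩
      simp [hπs]
    · have hx' : x - s (π x) = x := by rw [LinearMap.mem_ker.1 hx]; simp
      have hsum : x - s (π x) = ∑ i, x i • (Pi.single i 1 - s (π (Pi.single i 1))) := by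
        conv_lhs => rw [pi_eq_sum_univ' x]
        simp only [map_sum, map_smul, smul_sub, Finset.sum_sub_distrib]
      rw [← hx', hsum]
      exact Submodule.sum_mem _ fun i _ =>
        Submodule.smul_mem _ _ (Submodule.subset_span ⟨i, rfl⟩)
  obtain ⟨k, j', π', s', r, ι, hkj, -, -, hr, hι, hπs', hrι, hπι, hdec, hker'⟩ :=
    exists_splitting G hG
  rw [hker] at hker'
  have hj : j' = j := by
    have h1 := π.finrank_range_add_finrank_ker
    have h2 := π'.finrank_range_add_finrank_ker
    rw [LinearMap.range_eq_top.2 fun y => ⟨s y, hπs y⟩, finrank_top] at h1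
    rw [LinearMap.range_eq_top.2 fun y => ⟨s' y, hπs' y⟩, finrank_top, hker'] at h2
    simp only [Module.finrank_fin_fun] at h1 h2
    omega
  refine ⟨k, r, ι, by omega, hr, hι, hrι, fun y => ?_, fun x hx => ?_⟩
  · have : ι y ∈ LinearMap.ker π' := hπι y
    rw [hker'] at this
    exact this
  · have h : x ∈ LinearMap.ker π' := by rw [hker']; exact hx
    simpa [LinearMap.mem_ker.1 h] using hdec x

/-- If the lattice points of `K` positively span the image of `π`, then the kernel of `π` meets
the interior of `K`. -/
theorem exists_mem_interior_of_coneHull_eq_univ {n j : ℕ} {K T : Set (Fin n → ℝ)}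
    (hK : Convex ℝ K) (hne : (interior K).Nonempty) (hTK : T ⊆ K)
    {π : (Fin n → ℝ) →ₗ[ℝ] (Fin j → ℝ)} (hπ : Function.Surjective π)
    (hcone : coneHull (π '' T) = Set.univ) : ∃ o ∈ interior K, π o = 0 := by
  by_contra! h
  obtain ⟨f, hf⟩ := geometric_hahn_banach_open_point (hK.interior.linear_image π)
    (π.isOpenMap_of_finiteDimensional hπ _ isOpen_interior)
    (x := 0) (by rintro ⟨o, ho, h0⟩; exact h o ho h0)
  rw [map_zero] at hf
  have hK' : ∀ x ∈ K, f (π x) ≤ 0 := fun x hx => by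
    have hx' : x ∈ closure (interior K) := by
      rw [hK.closure_interior_eq_closure_of_nonempty_interior hne]
      exact subset_closure hx
    have hcl : IsClosed {x | f (π x) ≤ 0} :=
      isClosed_le (f.continuous.comp π.continuous_of_finiteDimensional) continuous_const
    exact closure_minimal (fun y hy => (hf _ ⟨y, hy, rfl⟩).le) hcl hx'
  obtain ⟨o, ho⟩ := hne
  have h1 := hf _ ⟨o, ho, rfl⟩
  have h2 := nonneg_of_mem_coneHull (-f.toLinearMap) (s := π '' T) (by
    rintro _ ⟨v, hv, rfl⟩
    simpa using hK' v (hTK hv)) (hcone ▸ Set.mem_univ (-π o))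
  simp at h2
  linarith

section slice

variable {n j : ℕ} {K : Set (Fin n → ℝ)} {π : (Fin n → ℝ) →ₗ[ℝ] (Fin j → ℝ)} {b : ℝ}

/-- Balancing a point of `K` by a conical combination in the quotient lands in a controlled
dilate of `K`. -/
theorem IsPacking.balanced_mem (hpack : IsPacking K π b) (hb : 0 < b) (hK : Convex ℝ K)
    (hK0 : 0 ∈ K) (hne : (interior K).Nonempty) {E : Fin j → Fin n → ℝ} (hE : ∀ i, E i ∈ K)
    {c : Fin j → ℝ} (hc : ∀ i, 0 ≤ c i) {p : Fin n → ℝ} (hp : p ∈ K)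
    (h : -π p = ∑ i, c i • π (E i)) :
    |(Matrix.of fun i => π (E i)).det| • (p + ∑ i, c i • E i) ∈
      ((j.factorial : ℕ) / b ^ j : ℝ) • K := by
  have hdet := det_sub_of_eq_sum (fun i => π (E i)) (fun i => - c i) (π p) (by
    rw [← neg_neg (π p), h]; simp)
  have hle := hpack.abs_det_le hb hK hne E hE p hp
  have hs : 0 ≤ ∑ i, c i := Finset.sum_nonneg fun i _ => hc i
  rw [hdet, abs_mul, Finset.sum_neg_distrib, sub_neg_eq_add,
    abs_of_pos (by linarith : 0 < 1 + ∑ i, c i)] at hle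
  set D := |(Matrix.of fun i => π (E i)).det|
  set g : ℝ := (j.factorial : ℕ) / b ^ j
  have hg : 0 < g := by positivity
  have hD : 0 ≤ D := abs_nonneg _
  set s := ∑ i, c i
  have hq : (1 / (1 + s)) • (p + ∑ i, c i • E i) ∈ K := by
    have := hK.sum_mem (t := (Finset.univ : Finset (Option (Fin j))))
      (w := fun o => o.elim (1 / (1 + s)) fun i => c i / (1 + s))
      (z := fun o => o.elim p E) (by
        rintro (_ | i) -
        · simp only [Option.elim]; positivity
        · simp only [Option.elim]; have := hc i; positivity)
      (by
        rw [Fintype.sum_option]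
        simp only [Option.elim, ← Finset.sum_div]
        rw [← add_div, div_self (by positivity)])
      (by rintro (_ | i) -; exacts [hp, hE i])
    rw [Fintype.sum_option] at this
    simp only [Option.elim] at this
    convert this using 1
    rw [smul_add, Finset.smul_sum]
    simp only [smul_smul]
    congr! 3
    ring
  refine ⟨(D * (1 + s) / g) • ((1 / (1 + s)) • (p + ∑ i, c i • E i)), ?_, ?_⟩
  · exact hK.smul_mem_of_zero_mem hK0 hq ⟨by positivity, (div_le_one hg).2 hle⟩
  · simp only [smul_smul]
    congr 1
    field_simp

theorem IsPacking.mem_coneHull_slice (hpack : IsPacking K π b) (hb : 0 < b) (hK : Convex ℝ K)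
    (hK0 : 0 ∈ K) (hne : (interior K).Nonempty) (hπ : IsIntegralMap π)
    (hspan : Submodule.span ℝ (π '' (intPts n ∩ K)) = ⊤) (m : ℕ) :
    ∀ (B : Finset (Fin n → ℝ)) (κ : (Fin n → ℝ) → ℝ), B.card = m → (B : Set (Fin n → ℝ)) ⊆
      intPts n ∩ K → (∀ v ∈ B, 0 ≤ κ v) → π (∑ v ∈ B, κ v • v) = 0 →
      ∑ v ∈ B, κ v • v ∈ coneHull {z | z ∈ intPts n ∧ π z = 0 ∧
        z ∈ ((j.factorial : ℕ) / b ^ j : ℝ) • K} := by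
  classical
  induction m with
  | zero =>
    intro B κ hB _ _ _
    rw [Finset.card_eq_zero.1 hB]
    simpa using coneHull_zero _
  | succ m ih =>
    intro B κ hB hBT hκ hsum
    have herase : ∀ (κ' : (Fin n → ℝ) → ℝ), (∀ v ∈ B, 0 ≤ κ' v) → (∃ v ∈ B, κ' v = 0) →
        π (∑ v ∈ B, κ' v • v) = 0 → ∑ v ∈ B, κ' v • v ∈ coneHull {z | z ∈ intPts n ∧ π z = 0 ∧
        z ∈ ((j.factorial : ℕ) / b ^ j : ℝ) • K} := by
      rintro κ' h1 ⟨v, hv, h0⟩ h2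
      have he : ∑ v ∈ B, κ' v • v = ∑ v ∈ B.erase v, κ' v • v := by
        rw [← Finset.add_sum_erase B _ hv, h0, zero_smul, zero_add]
      rw [he] at h2 ⊢
      exact ih _ κ' (by rw [Finset.card_erase_of_mem hv, hB]; rfl)
        ((Finset.coe_subset.2 (Finset.erase_subset _ _)).trans hBT)
        (fun w hw => h1 w (Finset.mem_of_mem_erase hw)) h2
    by_cases hz : ∃ v ∈ B, κ v = 0
    · exact herase κ hκ hz hsum
    push Not at hz
    obtain ⟨e, he⟩ : B.Nonempty := by rw [← Finset.card_pos]; omega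
    have hκe : 0 < κ e := lt_of_le_of_ne (hκ e he) (hz e he).symm
    have hneg : -π e ∈ coneHull (π '' (B : Set (Fin n → ℝ))) := by
      have h1 : -π e = ∑ v ∈ B.erase e, (κ v / κ e) • π v := by
        rw [map_sum, ← Finset.add_sum_erase B _ he, map_smul] at hsum
        have h2 : -π e = (1 / κ e) • ∑ v ∈ B.erase e, π (κ v • v) := by
          rw [eq_neg_of_add_eq_zero_right hsum, smul_neg, smul_smul]
          field_simp
          simp
        rw [h2, Finset.smul_sum]
        refine Finset.sum_congr rfl fun v _ => ?_
        rw [map_smul, smul_smul]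
        congr 1
        ring
      rw [h1]
      exact mem_coneHull_finset _ _ _ (fun v hv => div_nonneg
        (hκ v (Finset.mem_of_mem_erase hv)) hκe.le)
        fun v hv => ⟨v, Finset.mem_of_mem_erase hv, rfl⟩
    obtain ⟨E, c, hET, hc, hcB, hli, hEc⟩ := exists_basis_conical π hBT hspan hneg
    have hz := hpack.balanced_mem hb hK hK0 hne (fun i => (hET i).2) hc (hBT he).2 hEc
    have hD := det_ne_zero_of_linearIndependent hli
    have hDint := det_mul_coord_int (fun i => π (E i)) (fun i => hπ _ (hET i).1) c
      (hEc ▸ intPts_neg (hπ _ (hBT he).1))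
    have hDint0 := det_mem_int (fun i => π (E i)) (fun i => hπ _ (hET i).1)
    set D := (Matrix.of fun i => π (E i)).det
    have hDpos : 0 < |D| := abs_pos.2 hD
    have habs : ∀ x : ℝ, (∃ m : ℤ, D * x = m) → ∃ m : ℤ, |D| * x = m := by
      rintro x ⟨m, hm⟩
      rcases abs_choice D with h | h
      · exact ⟨m, by rw [h, hm]⟩
      · exact ⟨-m, by rw [h, neg_mul, hm]; simp⟩
    obtain ⟨mD, hmD⟩ := habs 1 (by simpa using hDint0)
    have hzint : |D| • (e + ∑ i, c i • E i) ∈ intPts n := by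
      rw [smul_add, Finset.smul_sum]
      refine intPts_add ?_ (intPts_sum _ _ fun i _ => ?_)
      · rw [← mul_one |D|, hmD]; exact intPts_zsmul _ (hBT he).1
      · obtain ⟨m, hm⟩ := habs _ (hDint i)
        rw [smul_smul, hm]; exact intPts_zsmul _ (hET i).1
    have hzker : π (|D| • (e + ∑ i, c i • E i)) = 0 := by
      simp only [map_smul, map_add, map_sum]
      rw [← hEc]; simp
    let d : (Fin n → ℝ) → ℝ := fun v => |D| * ((if v = e then 1 else 0) +
      ∑ i, if E i = v then c i else 0)
    have hd0 : ∀ v, 0 ≤ d v := fun v => mul_nonneg hDpos.le (add_nonneg (by split_ifs <;> simp)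
      (Finset.sum_nonneg fun i _ => by split_ifs; exacts [hc i, le_rfl]))
    have hde : 0 < d e := mul_pos hDpos (add_pos_of_pos_of_nonneg (by simp)
      (Finset.sum_nonneg fun i _ => by split_ifs; exacts [hc i, le_rfl]))
    have hzd : |D| • (e + ∑ i, c i • E i) = ∑ v ∈ B, d v • v := by
      simp only [d, mul_smul, ← Finset.smul_sum, add_smul, Finset.sum_add_distrib, Finset.sum_smul]
      congr 2
      · simp [he]
      · rw [Finset.sum_comm]
        refine Finset.sum_congr rfl fun i _ => ?_
        simp only [ite_smul, zero_smul, Finset.sum_ite_eq]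
        split_ifs with h
        · rfl
        · by_contra h'
          exact h (hcB i fun h0 => h' (by rw [h0, zero_smul]))
    obtain ⟨w, hw, hmin⟩ := (B.filter fun v => 0 < d v).exists_min_image (fun v => κ v / d v)
      ⟨e, by simp [he, hde]⟩
    obtain ⟨hwB, hdw⟩ := Finset.mem_filter.1 hw
    have hμ : 0 ≤ κ w / d w := div_nonneg (hκ w hwB) hdw.le
    have hsplit : ∑ v ∈ B, κ v • v =
        ∑ v ∈ B, (κ v - κ w / d w * d v) • v + (κ w / d w) • ∑ v ∈ B, d v • v := by
      simp only [sub_smul, Finset.sum_sub_distrib, Finset.smul_sum, smul_smul]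
      simp
    rw [hzd] at hz hzint hzker
    rw [hsplit]
    refine coneHull_add (herase (fun v => κ v - κ w / d w * d v) (fun v hv => ?_)
      ⟨w, hwB, by field_simp; simp⟩ ?_)
      (coneHull_smul hμ (subset_coneHull _ ⟨hzint, hzker, hz⟩))
    · rcases (hd0 v).eq_or_lt with h | h
      · simp [← h, hκ v hv]
      · have := hmin v (by simp [hv, h])
        rw [le_div_iff₀ h] at this
        linarith
    · rw [hsplit, map_add, map_smul, hzker, smul_zero, add_zero] at hsum
      exact hsum

theorem IsPacking.mem_coneHull_of_ker (hpack : IsPacking K π b) (hb : 0 < b) (hK : Convex ℝ K)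
    (hK0 : 0 ∈ K) (hne : (interior K).Nonempty) (hπ : IsIntegralMap π)
    (hspan : Submodule.span ℝ (π '' (intPts n ∩ K)) = ⊤) {x : Fin n → ℝ}
    (hx : x ∈ coneHull (intPts n ∩ K)) (h0 : π x = 0) :
    x ∈ coneHull {z | z ∈ intPts n ∧ π z = 0 ∧ z ∈ ((j.factorial : ℕ) / b ^ j : ℝ) • K} := by
  obtain ⟨B, c, hBT, -, hc, rfl⟩ := exists_linearIndepOn_conical (id : _ → Fin n → ℝ)
    (T := intPts n ∩ K) (x := x) (by simpa using hx)
  exact hpack.mem_coneHull_slice hb hK hK0 hne hπ hspan _ B c rfl hBT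
    (fun v hv => (hc v hv).le) h0

end slice

section extension

variable {V : Type*} [AddCommGroup V] [Module ℝ V] {j k : ℕ}
  {π : V →ₗ[ℝ] (Fin j → ℝ)} {r : V →ₗ[ℝ] (Fin k → ℝ)} {ι : (Fin k → ℝ) →ₗ[ℝ] V} {T : Set V}

/-- Functionals which are nonnegative on `T` and extend `ψ` along `ι`. -/
def IsNonnegExtension (T : Set V) (ι : (Fin k → ℝ) →ₗ[ℝ] V) (ψ : (Fin k → ℝ) →ₗ[ℝ] ℝ)
    (f : V →ₗ[ℝ] ℝ) : Prop :=
  (∀ y, f (ι y) = ψ y) ∧ ∀ v ∈ T, 0 ≤ f v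

theorem exists_isNonnegExtension (hcone : coneHull (π '' T) = Set.univ)
    (hrι : ∀ y, r (ι y) = y) (hπι : ∀ y, π (ι y) = 0)
    {ψ : (Fin k → ℝ) →ₗ[ℝ] ℝ} (hψ : ∀ x ∈ coneHull T, π x = 0 → 0 ≤ ψ (r x)) :
    ∃ f, IsNonnegExtension T ι ψ f := by
  let C : PointedCone ℝ V :=
    { carrier := coneHull T
      add_mem' := coneHull_add
      zero_mem' := coneHull_zero T
      smul_mem' := fun c _ hx => coneHull_smul c.2 hx }
  obtain ⟨f, hf, hfC⟩ := riesz_extension C ⟨LinearMap.ker π, (ψ ∘ₗ r).domRestrict _⟩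
    (fun x hx => hψ x hx x.2) (fun y => by
      have hy : π y ∈ coneHull (π '' T) := hcone ▸ Set.mem_univ _
      rw [coneHull_image] at hy
      obtain ⟨t, ht, hty⟩ := hy
      refine ⟨⟨t - y, by simp [hty]⟩, ?_⟩
      rw [sub_add_cancel]
      exact ht)
  refine ⟨f, fun y => ?_, fun v hv => hfC v (subset_coneHull T hv)⟩
  have := hf ⟨ι y, hπι y⟩
  simpa [hrι] using this

/-- Among the nonnegative extensions, those which are determined by the points of `T` at which
they vanish dominate. -/
theorem IsNonnegExtension.exists_basic (hT : T.Finite) (hcone : coneHull (π '' T) = Set.univ)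
    (hπι : ∀ y, π (ι y) = 0) {ψ : (Fin k → ℝ) →ₗ[ℝ] ℝ} {f : V →ₗ[ℝ] ℝ}
    (hf : IsNonnegExtension T ι ψ f) (x : V) :
    ∃ f', IsNonnegExtension T ι ψ f' ∧ f x ≤ f' x ∧
      Submodule.span ℝ (π '' (T ∩ {v | f' v = 0})) = ⊤ := by
  obtain ⟨g, ⟨hg, hfg⟩, hmax⟩ := exists_max_nat
    (fun g : V →ₗ[ℝ] ℝ => IsNonnegExtension T ι ψ g ∧ f x ≤ g x)
    (fun g => (T ∩ {v | g v = 0}).ncard) T.ncard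
    (fun g => Set.ncard_le_ncard Set.inter_subset_left hT) ⟨f, hf, le_rfl⟩
  refine ⟨g, hg, hfg, ?_⟩
  by_contra hne
  obtain ⟨η0, hη0, hker⟩ := Submodule.exists_le_ker_of_lt_top _ (lt_top_iff_ne_top.2 hne)
  obtain ⟨η, hη, hηx, hker⟩ : ∃ η : (Fin j → ℝ) →ₗ[ℝ] ℝ, η ≠ 0 ∧ 0 ≤ η (π x) ∧
      ∀ v ∈ T, g v = 0 → η (π v) = 0 := by
    have hk : ∀ v ∈ T, g v = 0 → η0 (π v) = 0 := fun v hv h0 =>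
      hker (Submodule.subset_span ⟨v, ⟨hv, h0⟩, rfl⟩)
    rcases le_total 0 (η0 (π x)) with h | h
    · exact ⟨η0, hη0, h, hk⟩
    · exact ⟨-η0, neg_ne_zero.2 hη0, by simpa using h, fun v hv h0 => by simp [hk v hv h0]⟩
  have hneg : ∃ v ∈ T, (η ∘ₗ π) v < 0 := by
    by_contra! h
    refine hη (LinearMap.ext fun y => ?_)
    have h1 : ∀ {x}, x ∈ coneHull (π '' T) → 0 ≤ η x := nonneg_of_mem_coneHull η
      (by rintro _ ⟨v, hv, rfl⟩; exact h v hv)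
    have h2 := h1 (x := y) (hcone ▸ Set.mem_univ _)
    have h3 := h1 (x := -y) (hcone ▸ Set.mem_univ _)
    rw [map_neg] at h3
    exact le_antisymm (neg_nonneg.1 h3) h2
  obtain ⟨s, hs, hs1, v, hv, hvn, hv0⟩ := exists_step hT g (η ∘ₗ π) hg.2 hker hneg
  have hlt := ncard_lt_of_step hT (f := g) (g := g + s • (η ∘ₗ π))
    (fun v hv hgv => by simp [hgv, hker v hv hgv])
    ⟨v, hv, fun h => hvn.ne (hker v hv h), by simpa using hv0⟩
  have hle := hmax (g + s • (η ∘ₗ π)) ⟨⟨fun y => by simp [hπι, hg.1], fun v hv => by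
    simpa using hs1 v hv⟩, by simpa using le_add_of_le_of_nonneg hfg (mul_nonneg hs.le hηx)⟩
  omega

theorem finite_basic_extensions (hT : T.Finite) (hιr : ∀ x, π x = 0 → ι (r x) = x)
    (ψ : (Fin k → ℝ) →ₗ[ℝ] ℝ) :
    {f | IsNonnegExtension T ι ψ f ∧
      Submodule.span ℝ (π '' (T ∩ {v | f v = 0})) = ⊤}.Finite := by
  refine Set.Finite.of_finite_image (f := fun f => T ∩ {v | f v = 0})
    (hT.finite_subsets.subset ?_) ?_
  · rintro _ ⟨f, -, rfl⟩
    exact Set.inter_subset_left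
  · rintro f ⟨hf, hspan⟩ g ⟨hg, -⟩ hfg
    have hfg : T ∩ {v | f v = 0} = T ∩ {v | g v = 0} := hfg
    ext x
    have hx : π x ∈ Submodule.span ℝ (π '' (T ∩ {v | f v = 0})) := hspan ▸ Submodule.mem_top
    rw [Submodule.span_image] at hx
    obtain ⟨t, ht, htx⟩ := hx
    have h1 : Submodule.span ℝ (T ∩ {v | f v = 0}) ≤ LinearMap.ker f :=
      Submodule.span_le.2 fun v hv => hv.2
    have h2 : Submodule.span ℝ (T ∩ {v | f v = 0}) ≤ LinearMap.ker g :=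
      Submodule.span_le.2 fun v hv => (hfg ▸ hv : v ∈ T ∩ {v | g v = 0}).2
    have h3 := hιr (x - t) (by rw [map_sub, htx, sub_self])
    have h4 : f (x - t) = g (x - t) := by rw [← h3, hf.1, hg.1]
    simpa [LinearMap.mem_ker.1 (h1 ht), LinearMap.mem_ker.1 (h2 ht)] using h4

end extension

section cover

variable {n j k : ℕ} {K : Set (Fin n → ℝ)} {π : (Fin n → ℝ) →ₗ[ℝ] (Fin j → ℝ)}
  {r : (Fin n → ℝ) →ₗ[ℝ] (Fin k → ℝ)} {ι : (Fin k → ℝ) →ₗ[ℝ] (Fin n → ℝ)} {b : ℝ}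

theorem exists_functional_of_slice (hK : Convex ℝ K) (hKc : IsCompact K) (hK0 : 0 ∈ K)
    (hne : (interior K).Nonempty) (hKT : K ⊆ coneHull (intPts n ∩ K)) (hb : 0 < b)
    (hπ : IsIntegralMap π) (hr : IsIntegralMap r) (hpack : IsPacking K π b)
    (hcone : coneHull (π '' (intPts n ∩ K)) = Set.univ)
    (hιr : ∀ x, π x = 0 → ι (r x) = x) (hrι : ∀ y, r (ι y) = y) (hπι : ∀ y, π (ι y) = 0)
    {ψ : (Fin k → ℝ) →ₗ[ℝ] ℝ} (hψ0 : ψ ≠ 0) (hψint : ∀ y ∈ intPts k, ∃ m : ℤ, ψ y = m)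
    {β : ℝ} (hψ : ∀ y, ι y ∈ ((j.factorial : ℕ) / b ^ j : ℝ) • K → 0 ≤ ψ y ∧ ψ y ≤ β) :
    ∃ Φ : (Fin n → ℝ) →ₗ[ℝ] ℝ, Φ ≠ 0 ∧ (∀ y ∈ intPts n, ∃ m : ℤ, Φ y = m) ∧
      ∀ x ∈ K, 0 ≤ Φ x ∧ Φ x ≤ β := by
  classical
  set T := intPts n ∩ K with hTdef
  have hT : T.Finite := finite_intPts_inter hKc
  have hspan : Submodule.span ℝ (π '' T) = ⊤ := by
    rw [← span_coneHull, hcone, Submodule.span_univ]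
  have hψT : ∀ x ∈ coneHull T, π x = 0 → 0 ≤ ψ (r x) := by
    intro x hx h0
    refine nonneg_of_mem_coneHull (ψ ∘ₗ r) ?_
      (hpack.mem_coneHull_of_ker hb hK hK0 hne hπ hspan hx h0)
    rintro z ⟨hz, hz0, hzK⟩
    exact (hψ (r z) (by rw [hιr z hz0]; exact hzK)).1
  obtain ⟨f1, hf1⟩ := exists_isNonnegExtension hcone hrι hπι hψT
  have hcont : ∀ f : (Fin n → ℝ) →ₗ[ℝ] ℝ, Continuous f := fun f =>
    f.continuous_of_finiteDimensional
  have hmaxK : ∀ f : (Fin n → ℝ) →ₗ[ℝ] ℝ, ∃ x ∈ K, ∀ y ∈ K, f y ≤ f x := fun f =>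
    hKc.exists_isMaxOn ⟨0, hK0⟩ (hcont f).continuousOn
  choose q hqK hq using hmaxK
  obtain ⟨f2, hf2, -, hf2s⟩ := hf1.exists_basic hT hcone hπι 0
  obtain ⟨f, ⟨hf, hfs⟩, hfmax⟩ := Set.exists_max_image _ (fun f => f (q f))
    (finite_basic_extensions (π := π) (r := r) hT hιr ψ) ⟨f2, hf2, hf2s⟩
  have hbest : ∀ g, IsNonnegExtension T ι ψ g → g (q f) ≤ f (q f) := by
    intro g hg
    obtain ⟨g', hg', hle, hs⟩ := hg.exists_basic hT hcone hπι (q f)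
    exact hle.trans ((hq g' _ (hqK f)).trans (hfmax g' ⟨hg', hs⟩))
  have hmem : -π (q f) ∈ coneHull (π '' (T ∩ {v | f v = 0})) := by
    by_contra hnot
    obtain ⟨η, hη, hηn⟩ := farkas ((hT.subset Set.inter_subset_left).image π) hnot
    obtain ⟨s, hs, hs1⟩ := exists_step_small hT f (η ∘ₗ π) hf.2
      fun v hv h0 => hη (π v) ⟨v, ⟨hv, h0⟩, rfl⟩
    have := hbest (f + s • (η ∘ₗ π)) ⟨fun y => by simp [hπι, hf.1], fun v hv => by
      simpa using hs1 v hv⟩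
    simp only [LinearMap.add_apply, LinearMap.smul_apply, LinearMap.comp_apply, smul_eq_mul] at this
    rw [map_neg] at hηn
    nlinarith
  obtain ⟨E, c, hE, hc, -, hli, hEc⟩ := exists_basis_conical π subset_rfl hfs hmem
  have hbal := hpack.balanced_mem hb hK hK0 hne (fun i => (hE i).1.2) hc (hqK f) hEc
  have hD := det_ne_zero_of_linearIndependent hli
  have hEint : ∀ i, π (E i) ∈ intPts j := fun i => hπ _ (hE i).1.1
  have hDint := det_mul_coord_int (fun i => π (E i)) hEint
  have hDint0 := det_mem_int (fun i => π (E i)) hEint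
  set D := (Matrix.of fun i => π (E i)).det
  have hDpos : 0 < |D| := abs_pos.2 hD
  have habs : ∀ x : ℝ, (∃ m : ℤ, D * x = m) → ∃ m : ℤ, |D| * x = m := by
    rintro x ⟨m, hm⟩
    rcases abs_choice D with h | h
    · exact ⟨m, by rw [h, hm]⟩
    · exact ⟨-m, by rw [h, neg_mul, hm]; simp⟩
  obtain ⟨mD, hmD⟩ := habs 1 (by simpa using hDint0)
  rw [mul_one] at hmD
  have hfE : ∀ i, f (E i) = 0 := fun i => (hE i).2
  refine ⟨|D| • f, fun h0 => hψ0 ?_, fun y hy => ?_, fun x hx => ⟨?_, ?_⟩⟩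
  · have hf0 := (smul_eq_zero.1 h0).resolve_left hDpos.ne'
    refine LinearMap.ext fun y => ?_
    rw [← hf.1, hf0]; simp
  · let bas := (Module.Basis.mk hli (by
      rw [hli.span_eq_top_of_card_eq_finrank' (by simp)]))
    have hrep : ∑ i, bas.repr (π y) i • π (E i) = π y := by
      simpa [bas] using bas.sum_repr (π y)
    have hco := fun i => habs _ (hDint (bas.repr (π y)) (by rw [hrep]; exact hπ y hy) i)
    set w := |D| • y - ∑ i, (|D| * bas.repr (π y) i) • E i with hw
    have hwint : w ∈ intPts n := by
      refine intPts_sub (by rw [hmD]; exact intPts_zsmul _ hy) (intPts_sum _ _ fun i _ => ?_)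
      obtain ⟨m, hm⟩ := hco i
      rw [hm]
      exact intPts_zsmul _ (hE i).1.1
    have hwker : π w = 0 := by
      simp only [hw, map_sub, map_smul, map_sum, mul_smul, ← Finset.smul_sum, hrep, sub_self]
    have hfw : (|D| • f) y = f w := by
      simp [hw, hfE]
    rw [hfw, ← hιr w hwker, hf.1]
    exact hψint _ (hr _ hwint)
  · exact mul_nonneg hDpos.le (nonneg_of_mem_coneHull f hf.2 (hKT hx))
  · have h1 : (|D| • f) x ≤ |D| * f (q f) := mul_le_mul_of_nonneg_left (hq f x hx) hDpos.le
    have h2 : |D| * f (q f) = f (|D| • (q f + ∑ i, c i • E i)) := by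
      simp [hfE]
    have hker : π (|D| • (q f + ∑ i, c i • E i)) = 0 := by
      simp only [map_smul, map_add, map_sum]
      rw [← hEc]; simp
    refine h1.trans ?_
    rw [h2, ← hιr _ hker, hf.1]
    exact (hψ _ (by rw [hιr _ hker]; exact hbal)).2

end cover

/-- Supporting functional at a point outside the dilated interior. -/
theorem exists_functional_le_of_notMem {n : ℕ} {K : Set (Fin n → ℝ)} (hK : Convex ℝ K)
    (hne : (interior K).Nonempty) {a : ℝ} (ha : 0 < a) {y : Fin n → ℝ}
    (hy : y ∉ a • interior K) :
    ∃ α : (Fin n → ℝ) →ₗ[ℝ] ℝ, α ≠ 0 ∧ ∀ x ∈ K, a * α x ≤ α y := by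
  obtain ⟨f, hf, hfK⟩ := geometric_hahn_banach_of_nonempty_interior_point hK
    (x := a⁻¹ • y) (fun h => hy ((Set.mem_smul_set_iff_inv_smul_mem₀ ha.ne' _ _).2 h)) hne
  refine ⟨f.toLinearMap, fun h => hf (ContinuousLinearMap.coe_injective h), fun x hx => ?_⟩
  have := hfK x hx
  rw [map_smul, smul_eq_mul, inv_mul_eq_div, le_div_iff₀ ha] at this
  simpa [mul_comm] using this

theorem span_eq_top_of_subset_coneHull {n : ℕ} {K T : Set (Fin n → ℝ)}
    (hne : (interior K).Nonempty) (hKT : K ⊆ coneHull T) : Submodule.span ℝ T = ⊤ :=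
  Submodule.eq_top_of_nonempty_interior' _
    (hne.mono (interior_mono (hKT.trans (coneHull_subset_span T))))

theorem le_rank_of_lattice_free {n : ℕ} {K : Set (Fin n → ℝ)} (hK : Convex ℝ K) (hK0 : 0 ∈ K)
    (hne : (interior K).Nonempty) (hspan : Submodule.span ℝ (intPts n ∩ K) = ⊤) {a : ℝ}
    (ha : 0 < a) (hlat : ∀ y ∈ intPts n, y ∉ a • interior K) : a ≤ n := by
  obtain ⟨E, hE, hli⟩ := exists_basis_mem (LinearMap.id : _ →ₗ[ℝ] (Fin n → ℝ))
    (T := intPts n ∩ K) (by simpa using hspan)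
  obtain ⟨α, hα, hαK⟩ := exists_functional_le_of_notMem hK hne ha
    (hlat (∑ i, E i) (intPts_sum _ _ fun i _ => (hE i).1))
  have h0 : 0 ≤ α (∑ i, E i) := by simpa using hαK 0 hK0
  have hi : ∀ i, a * α (E i) ≤ α (∑ i, E i) := fun i => hαK _ (hE i).2
  have hsum : a * α (∑ i, E i) ≤ n * α (∑ i, E i) := by
    conv_lhs => rw [map_sum, Finset.mul_sum]
    simpa using Finset.sum_le_card_nsmul Finset.univ _ _ fun i _ => hi i
  rcases h0.eq_or_lt with h | h
  · exfalso
    rw [← h] at hi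
    have hle : ∀ i ∈ Finset.univ, α (E i) ≤ 0 := fun i _ =>
      nonpos_of_mul_nonpos_right (hi i) ha
    rw [map_sum, eq_comm, Finset.sum_eq_zero_iff_of_nonpos hle] at h
    refine hα (LinearMap.ext fun x => ?_)
    have hx : x ∈ Submodule.span ℝ (Set.range E) := by
      rw [LinearIndependent.span_eq_top_of_card_eq_finrank' (b := E) hli (by simp)]
      exact Submodule.mem_top
    have hker : Submodule.span ℝ (Set.range E) ≤ LinearMap.ker α :=
      Submodule.span_le.2 (by rintro _ ⟨i, rfl⟩; exact h i (Finset.mem_univ i))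
    exact hker hx
  · exact le_of_mul_le_mul_right hsum h

theorem exists_lattice_basis_plane {K : Set (Fin 2 → ℝ)} (hK : Convex ℝ K) (hKc : IsCompact K)
    (hK0 : 0 ∈ K) (hspan : Submodule.span ℝ (intPts 2 ∩ K) = ⊤) :
    ∃ bas : Module.Basis (Fin 2) ℝ (Fin 2 → ℝ), (∀ i, bas i ∈ intPts 2 ∩ K) ∧
      ∀ y ∈ intPts 2, ∀ i, ∃ m : ℤ, bas.repr y i = m := by
  have hT := finite_intPts_inter hKc
  obtain ⟨E0, hE0, hli0⟩ := exists_basis_mem (LinearMap.id : _ →ₗ[ℝ] (Fin 2 → ℝ))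
    (T := intPts 2 ∩ K) (by simpa using hspan)
  obtain ⟨E, ⟨hE, hD⟩, hmin⟩ := Set.exists_min_image
    {E : Fin 2 → Fin 2 → ℝ | (∀ i, E i ∈ intPts 2 ∩ K) ∧ (Matrix.of E).det ≠ 0}
    (fun E => |(Matrix.of E).det|) ((Set.Finite.pi' fun _ => hT).subset fun E h => h.1)
    ⟨E0, hE0, det_ne_zero_of_linearIndependent hli0⟩
  have hli : LinearIndependent ℝ E := Matrix.linearIndependent_rows_iff_isUnit.2
    ((Matrix.isUnit_iff_isUnit_det _).2 hD.isUnit)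
  let bas := basisOfLinearIndependentOfCardEqFinrank hli (by simp)
  have hbas : ∀ i, bas i = E i := fun i => by simp [bas]
  have hrep : ∀ x, ∑ i, bas.repr x i • E i = x := fun x => by
    simpa [hbas] using bas.sum_repr x
  have hdet : ∀ x i, (Matrix.of E).det * bas.repr x i =
      (Matrix.of (Function.update E i x)).det := by
    intro x i
    have := Matrix.det_updateRow_sum (Matrix.of E) i (bas.repr x)
    rw [smul_eq_mul, mul_comm] at this
    rw [← this]
    congr 2
    exact hrep x
  have hcoord : ∀ x ∈ intPts 2 ∩ K, ∀ i, bas.repr x i < 1 → 0 ≤ bas.repr x i →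
      bas.repr x i = 0 := by
    intro x hx i h1 h2
    by_contra h0
    have hd := hdet x i
    have := hmin (Function.update E i x) ⟨fun l => by
      by_cases h : l = i
      · subst h; simpa using hx
      · simpa [h] using hE l, by rw [← hd]; exact mul_ne_zero hD h0⟩
    rw [← hd, abs_mul, abs_of_nonneg h2] at this
    have := abs_pos.2 hD
    nlinarith
  have hmemK : ∀ x : Fin 2 → ℝ, (∀ i, 0 ≤ bas.repr x i) → bas.repr x 0 + bas.repr x 1 ≤ 1 →
      x ∈ K := by
    intro x h0 h1
    have := hK.sum_mem (t := Finset.univ) (w := ![1 - bas.repr x 0 - bas.repr x 1, bas.repr x 0,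
      bas.repr x 1]) (z := ![0, E 0, E 1]) (by
        intro i _
        fin_cases i
        · simp; linarith
        · exact h0 0
        · exact h0 1) (by simp [Fin.sum_univ_three]; ring) (by
        intro i _
        fin_cases i
        · exact hK0
        · exact (hE 0).2
        · exact (hE 1).2)
    rw [Fin.sum_univ_three] at this
    have hx := hrep x
    rw [Fin.sum_univ_two] at hx
    simpa [hx] using this
  refine ⟨bas, fun i => by rw [hbas]; exact hE i, fun y hy => ?_⟩
  set p := y - ∑ i, (⌊bas.repr y i⌋ : ℝ) • E i with hp
  have hpint : p ∈ intPts 2 :=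
    intPts_sub hy (intPts_sum _ _ fun i _ => intPts_zsmul _ (hE i).1)
  have hrepE : ∀ i l, bas.repr (E i) l = if i = l then 1 else 0 := fun i l => by
    rw [← hbas, bas.repr_self, Finsupp.single_apply]
  have hrp : ∀ i, bas.repr p i = Int.fract (bas.repr y i) := fun i => by
    fin_cases i <;> simp [hp, hrepE]
  suffices h : ∀ i, Int.fract (bas.repr y i) = 0 by
    intro i
    exact ⟨⌊bas.repr y i⌋, by have := h i; rw [Int.fract] at this; linarith⟩
  rcases le_or_gt (bas.repr p 0 + bas.repr p 1) 1 with h | h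
  · have hpK := hmemK p (fun i => by rw [hrp]; exact Int.fract_nonneg _) h
    intro i
    rw [← hrp]
    exact hcoord p ⟨hpint, hpK⟩ i (by rw [hrp]; exact Int.fract_lt_one _)
      (by rw [hrp]; exact Int.fract_nonneg _)
  · exfalso
    have h0 : bas.repr p 0 < 1 := by rw [hrp]; exact Int.fract_lt_one _
    have h1 : bas.repr p 1 < 1 := by rw [hrp]; exact Int.fract_lt_one _
    have hq : ∀ i, bas.repr (E 0 + E 1 - p) i = 1 - bas.repr p i := fun i => by
      fin_cases i <;> simp [hrepE]
    have hqK := hmemK (E 0 + E 1 - p) (fun i => by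
      rw [hq, hrp]; linarith [Int.fract_lt_one (bas.repr y i)]) (by rw [hq, hq]; linarith)
    have := hcoord _ ⟨intPts_sub (intPts_add (hE 0).1 (hE 1).1) hpint, hqK⟩ 0
      (by rw [hq]; linarith) (by rw [hq]; linarith)
    rw [hq] at this
    linarith

theorem exists_functional_plane {K : Set (Fin 2 → ℝ)} (hK : Convex ℝ K) (hKc : IsCompact K)
    (hK0 : 0 ∈ K) (hne : (interior K).Nonempty)
    (hspan : Submodule.span ℝ (intPts 2 ∩ K) = ⊤) {a : ℝ} (ha : 1 < a) (ha2 : a ≤ 2)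
    (hlat : ∀ y ∈ intPts 2, y ∉ a • interior K) :
    ∃ Φ : (Fin 2 → ℝ) →ₗ[ℝ] ℝ, Φ ≠ 0 ∧ (∀ y ∈ intPts 2, ∃ m : ℤ, Φ y = m) ∧
      ∀ x ∈ K, 0 ≤ Φ x ∧ Φ x ≤ 4 / a ^ 2 := by
  have ha0 : 0 < a := by linarith
  obtain ⟨bas, hbas, hInt⟩ := exists_lattice_basis_plane hK hKc hK0 hspan
  have hfun : ∀ (α : (Fin 2 → ℝ) →ₗ[ℝ] ℝ) x, α x =
      bas.repr x 0 * α (bas 0) + bas.repr x 1 * α (bas 1) := fun α x => by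
    conv_lhs => rw [← bas.sum_repr x]
    rw [Fin.sum_univ_two, map_add, map_smul, map_smul, smul_eq_mul, smul_eq_mul]
  have hzero : ∀ (α : (Fin 2 → ℝ) →ₗ[ℝ] ℝ), α (bas 0) = 0 → α (bas 1) = 0 → α = 0 :=
    fun α h0 h1 => LinearMap.ext fun x => by rw [hfun, h0, h1]; simp
  have key : ∀ i l : Fin 2, i ≠ l → ∀ x ∈ K, 0 ≤ bas.repr x l := by
    intro i l hil x hx
    obtain ⟨α, hα, hαK⟩ := exists_functional_le_of_notMem hK hne ha0 (hlat _ (hbas i).1)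
    have h0 : 0 ≤ α (bas i) := by simpa using hαK 0 hK0
    have h1 := hαK _ (hbas i).2
    have hi : α (bas i) = 0 := by nlinarith
    have hl := hαK _ (hbas l).2
    have hl0 : α (bas l) ≠ 0 := fun h => by
      fin_cases i <;> fin_cases l <;> first | exact hil rfl | exact hα (hzero α ‹_› ‹_›)
    have hx' := hαK _ hx
    have hαx : α x = bas.repr x l * α (bas l) := by
      rw [hfun]
      fin_cases i <;> fin_cases l
      · exact absurd rfl hil
      · change α (bas 0) = 0 at hi
        simp [hi]
      · change α (bas 1) = 0 at hi
        simp [hi]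
      · exact absurd rfl hil
    rw [hi] at hl hx'
    rw [hαx] at hx'
    have hneg : α (bas l) < 0 := lt_of_le_of_ne (nonpos_of_mul_nonpos_right hl ha0) hl0
    have := nonpos_of_mul_nonpos_right hx' ha0
    exact nonneg_of_mul_nonpos_left this hneg
  have hnn : ∀ l, ∀ x ∈ K, 0 ≤ bas.repr x l := by
    intro l
    fin_cases l
    · exact key 1 0 (by simp)
    · exact key 0 1 (by simp)
  obtain ⟨α, hα, hαK⟩ := exists_functional_le_of_notMem hK hne ha0
    (hlat _ (intPts_add (hbas 0).1 (hbas 1).1))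
  rw [map_add] at hαK
  have hs : 0 ≤ α (bas 0) + α (bas 1) := by simpa using hαK 0 hK0
  have h0 := hαK _ (hbas 0).2
  have h1 := hαK _ (hbas 1).2
  have hfin : ∀ l, 0 < α (bas l) → (∀ x ∈ K, a * (bas.repr x l * α (bas l)) ≤ 2 * α (bas l)) →
      ∃ Φ : (Fin 2 → ℝ) →ₗ[ℝ] ℝ, Φ ≠ 0 ∧ (∀ y ∈ intPts 2, ∃ m : ℤ, Φ y = m) ∧
      ∀ x ∈ K, 0 ≤ Φ x ∧ Φ x ≤ 4 / a ^ 2 := by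
    intro l hl hle
    refine ⟨bas.coord l, fun h => ?_, fun y hy => hInt y hy l, fun x hx => ⟨hnn l x hx, ?_⟩⟩
    · have := congrArg (fun f => f (bas l)) h
      simp at this
    · have h3 : a * bas.repr x l ≤ 2 := by
        refine le_of_mul_le_mul_right ?_ hl
        rw [mul_assoc]; exact hle x hx
      rw [bas.coord_apply, le_div_iff₀ (by positivity)]
      have := hnn l x hx
      nlinarith
  have hpos : 0 < α (bas 0) ∧ 0 < α (bas 1) := by
    by_contra hcon
    rw [not_and_or, not_lt, not_lt] at hcon
    refine hα ?_
    rcases hcon with h | h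
    · have : α (bas 1) = 0 := by nlinarith
      exact hzero α (by linarith) this
    · have : α (bas 0) = 0 := by nlinarith
      exact hzero α this (by linarith)
  rcases le_total (α (bas 1)) (α (bas 0)) with h | h
  · refine hfin 0 hpos.1 fun x hx => ?_
    have h2 := hαK x hx
    rw [hfun] at h2
    nlinarith [mul_nonneg (mul_nonneg ha0.le (hnn 1 x hx)) hpos.2.le]
  · refine hfin 1 hpos.2 fun x hx => ?_
    have h2 := hαK x hx
    rw [hfun] at h2
    nlinarith [mul_nonneg (mul_nonneg ha0.le (hnn 0 x hx)) hpos.1.le]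

theorem exists_pos_add_smul_sub_mem {n : ℕ} {A : Set (Fin n → ℝ)} {u : Fin n → ℝ}
    (hu : u ∈ interior A) (o : Fin n → ℝ) : ∃ ε : ℝ, 0 < ε ∧ u + ε • (u - o) ∈ A := by
  have hcont : ContinuousAt (fun ε : ℝ => u + ε • (u - o)) 0 := by fun_prop
  have hev : ∀ᶠ ε : ℝ in nhds 0, u + ε • (u - o) ∈ A :=
    hcont (by simpa using mem_interior_iff_mem_nhds.1 hu)
  obtain ⟨ε, hε, hpos⟩ := ((hev.filter_mono nhdsWithin_le_nhds).and
    (self_mem_nhdsWithin (a := (0 : ℝ)) (s := Set.Ioi 0))).exists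
  exact ⟨ε, hpos, hε⟩

theorem combo_add_smul_sub {n : ℕ} {ε : ℝ} (hε : 0 < ε) (u o : Fin n → ℝ) :
    (ε / (1 + ε)) • o + (1 / (1 + ε)) • (u + ε • (u - o)) = u := by
  have h1 : (1 + ε) ≠ 0 := by positivity
  ext i
  simp only [Pi.add_apply, Pi.smul_apply, Pi.sub_apply, smul_eq_mul]
  field_simp
  ring

/-- The interior of a preimage of a convex set under a linear map, as soon as the map meets the
interior of the set. -/
theorem map_mem_interior_of_mem_interior_preimage {n k : ℕ} {K : Set (Fin n → ℝ)}
    (hK : Convex ℝ K) (ι : (Fin k → ℝ) →ₗ[ℝ] (Fin n → ℝ)) {o : Fin k → ℝ}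
    (ho : ι o ∈ interior K) {u : Fin k → ℝ} (hu : u ∈ interior (ι ⁻¹' K)) :
    ι u ∈ interior K := by
  obtain ⟨ε, hpos, hε⟩ := exists_pos_add_smul_sub_mem hu o
  have h := hK.combo_interior_self_mem_interior ho hε (a := ε / (1 + ε)) (b := 1 / (1 + ε))
    (by positivity) (by positivity) (by field_simp; ring)
  rwa [← map_smul, ← map_smul, ← map_add, combo_add_smul_sub hpos] at h

/-- Interior points of the linear image of a convex body lift to interior points. -/
theorem exists_mem_interior_of_mem_interior_image {n k : ℕ} {K : Set (Fin n → ℝ)}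
    (hK : Convex ℝ K) (hne : (interior K).Nonempty) (π : (Fin n → ℝ) →ₗ[ℝ] (Fin k → ℝ))
    {w : Fin k → ℝ} (hw : w ∈ interior (π '' K)) : ∃ u ∈ interior K, π u = w := by
  obtain ⟨o, ho⟩ := hne
  obtain ⟨ε, hpos, u, hu, hε⟩ := exists_pos_add_smul_sub_mem hw (π o)
  refine ⟨_, hK.combo_interior_self_mem_interior ho hu (a := ε / (1 + ε)) (b := 1 / (1 + ε))
    (by positivity) (by positivity) (by field_simp; ring), ?_⟩
  rw [map_add, map_smul, map_smul, hε, combo_add_smul_sub hpos]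

/-- A full-dimensional convex body at the apex of a cone spanned by its lattice points, whose
dilate by `a` has no interior lattice points, is thin in some lattice direction which is
nonnegative on the cone. -/
theorem exists_thin_functional (n : ℕ) : ∀ (K : Set (Fin n → ℝ)), 1 ≤ n → Convex ℝ K →
    IsCompact K → 0 ∈ K → (interior K).Nonempty → K ⊆ coneHull (intPts n ∩ K) →
    ∀ a : ℝ, 0 < a → (∀ y ∈ intPts n, y ∉ a • interior K) →
    ∃ Φ : (Fin n → ℝ) →ₗ[ℝ] ℝ, Φ ≠ 0 ∧ (∀ y ∈ intPts n, ∃ m : ℤ, Φ y = m) ∧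
      ∀ x ∈ K, 0 ≤ Φ x ∧ Φ x ≤ 1 / gammaFn n a := by
  induction n using Nat.strong_induction_on with
  | _ n ih =>
  intro K hn hK hKc hK0 hne hKT a ha hlat
  have hspan := span_eq_top_of_subset_coneHull hne hKT
  have han := le_rank_of_lattice_free hK hK0 hne hspan ha hlat
  by_cases h2 : n = 2 ∧ 1 < a
  · obtain ⟨rfl, ha1⟩ := h2
    obtain ⟨Φ, h⟩ := exists_functional_plane hK hKc hK0 hne hspan ha1 (by simpa using han) hlat
    refine ⟨Φ, ?_⟩
    have : 1 / gammaFn 2 a = 4 / a ^ 2 := by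
      simp only [gammaFn]; norm_num
    rwa [this]
  obtain ⟨j, hj, hjn, π, hπ, hpack⟩ := exists_packing hn hK hne ha hlat
  have hn0 : (0 : ℝ) < n := by exact_mod_cast hn
  have hj1 : (1 : ℝ) ≤ j := by exact_mod_cast hj
  have hb : 0 < (2 * (j : ℝ) - 1) * a / (n : ℝ) ^ 2 := by
    have : 0 < 2 * (j : ℝ) - 1 := by linarith
    positivity
  by_cases hcone : coneHull (π '' (intPts n ∩ K)) = Set.univ
  · have hslice := gammaFn_le_slice n j hj
    set b := (2 * (j : ℝ) - 1) * a / (n : ℝ) ^ 2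
    set g : ℝ := (j.factorial : ℕ) / b ^ j with hgdef
    have hg : 0 < g := by positivity
    obtain ⟨k, r, ι, hkj, hr, hι, hrι, hπι, hιr⟩ := hπ.exists_kernel
    have hπint := hπ.1
    obtain ⟨s, -, hs⟩ := hπ.2
    obtain ⟨o, ho, hπo⟩ := exists_mem_interior_of_coneHull_eq_univ hK hne
      Set.inter_subset_right (fun y => ⟨s y, hs y⟩) hcone
    have hk : 1 ≤ k := by
      by_contra! hk
      obtain rfl : k = 0 := by omega
      have ho0 : o = 0 := by
        rw [← hιr o hπo, Subsingleton.elim (r o) 0, map_zero]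
      exact hlat 0 intPts_zero ⟨0, ho0 ▸ ho, by simp⟩
    have hgK : Convex ℝ (g • K) := hK.smul g
    have hgo : ι (r (g • o)) ∈ interior (g • K) := by
      rw [hιr _ (by rw [map_smul, hπo, smul_zero]), interior_smul₀ hg.ne']
      exact ⟨o, ho, rfl⟩
    have hιc : Continuous ι := ι.continuous_of_finiteDimensional
    obtain ⟨ψ, hψ0, hψint, hψ⟩ := ih k (by omega) (ι ⁻¹' (g • K)) hk
      (hgK.linear_preimage ι)
      (((hKc.smul g).image r.continuous_of_finiteDimensional).of_isClosed_subset
        ((hKc.smul g).isClosed.preimage hιc) fun y hy => ⟨ι y, hy, hrι y⟩)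
      ⟨0, hK0, by simp⟩
      ⟨r (g • o), interior_mono (Set.preimage_mono interior_subset)
        (by rw [(isOpen_interior.preimage hιc).interior_eq]; exact hgo)⟩
      (fun y hy => by
        have hx : ι y ∈ coneHull (intPts n ∩ K) := by
          obtain ⟨x, hx, hxy⟩ := hy
          rw [← hxy]
          exact coneHull_smul hg.le (hKT hx)
        have := hpack.mem_coneHull_of_ker hb hK hK0 hne hπint
          (by rw [← span_coneHull, hcone, Submodule.span_univ]) hx (hπι y)
        have hy' : y ∈ r '' coneHull _ := ⟨_, this, hrι y⟩
        rw [← coneHull_image] at hy'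
        refine coneHull_mono ?_ hy'
        rintro _ ⟨z, ⟨hz, hz0, hzK⟩, rfl⟩
        exact ⟨hr z hz, by rw [Set.mem_preimage, hιr z hz0]; exact hzK⟩)
      (a / g) (by positivity)
      (by
        rintro y hy ⟨u, hu, rfl⟩
        have hu' := map_mem_interior_of_mem_interior_preimage hgK ι hgo hu
        rw [interior_smul₀ hg.ne'] at hu'
        obtain ⟨w, hw, hwu⟩ := hu'
        refine hlat _ (hι _ hy) ⟨w, hw, ?_⟩
        simp only [map_smul] at hwu ⊢
        rw [← hwu, smul_smul]
        congr 1
        field_simp)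
    obtain ⟨Φ, hΦ0, hΦint, hΦ⟩ := exists_functional_of_slice hK hKc hK0 hne hKT hb hπint hr hpack
      hcone hιr hrι hπι hψ0 hψint hψ
    refine ⟨Φ, hΦ0, hΦint, fun x hx => ⟨(hΦ x hx).1, (hΦ x hx).2.trans ?_⟩⟩
    refine one_div_le_one_div_of_le (gammaFn_pos n a ha) ?_
    have := hslice (by omega) a ha han
    rwa [show n - j = k by omega] at this
  · obtain ⟨Φ, hΦ0, hΦint, hΦ⟩ := exists_functional_of_facet hK hKc hK0 hne hKT hπ hb hpack hspan
      hcone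
    refine ⟨Φ, hΦ0, hΦint, fun x hx => ⟨(hΦ x hx).1, (hΦ x hx).2.trans ?_⟩⟩
    have := gammaFn_le_case_one n j hj hjn a ha han fun h => by
      by_contra! h'
      exact h2 ⟨h, h'⟩
    rw [le_one_div (by positivity) (gammaFn_pos n a ha)]
    exact this

theorem interior_nonempty_of_span_eq_top {n : ℕ} {U : Set (Fin n → ℝ)} (hU : Convex ℝ U)
    (h0 : 0 ∈ U) (hspan : Submodule.span ℝ U = ⊤) : (interior U).Nonempty := by
  rw [hU.interior_nonempty_iff_affineSpan_eq_top,
    AffineSubspace.affineSpan_eq_top_iff_vectorSpan_eq_top_of_nonempty _ _ _ ⟨0, h0⟩,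
    vectorSpan_eq_span_vsub_set_right ℝ h0]
  simpa using hspan

theorem add_mem_interior_of_forall_add_mem {n : ℕ} {U : Set (Fin n → ℝ)} {c : Fin n → ℝ}
    (h : ∀ x ∈ U, x + c ∈ U) {u : Fin n → ℝ} (hu : u ∈ interior U) : u + c ∈ interior U := by
  refine interior_maximal (s := U) (t := (fun x => x + c) '' interior U) ?_ ?_ ⟨u, hu, rfl⟩
  · rintro _ ⟨x, hx, rfl⟩
    exact h x (interior_subset hx)
  · exact (Homeomorph.addRight c).isOpenMap _ isOpen_interior

/-- Modulo the lattice, every element of the span of finitely many lattice points can be moved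
into the cone which they generate. -/
theorem exists_intPts_add_mem_coneHull {n : ℕ} (G : Finset (Fin n → ℝ))
    (hG : (G : Set (Fin n → ℝ)) ⊆ intPts n) {z : Fin n → ℝ}
    (hz : z ∈ Submodule.span ℝ (G : Set (Fin n → ℝ))) :
    ∃ w ∈ intPts n, w ∈ Submodule.span ℝ (G : Set (Fin n → ℝ)) ∧
      z + w ∈ coneHull (G : Set (Fin n → ℝ)) := by
  obtain ⟨c, -, rfl⟩ := Submodule.mem_span_finset.1 hz
  refine ⟨∑ g ∈ G, ((⌈-c g⌉ : ℤ) : ℝ) • g, intPts_sum _ _ fun g hg => intPts_zsmul _ (hG hg),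
    Submodule.sum_mem _ fun g hg => Submodule.smul_mem _ _ (Submodule.subset_span hg), ?_⟩
  rw [← Finset.sum_add_distrib]
  simp only [← add_smul]
  exact mem_coneHull_finset G (fun g => g) _ (fun g _ => by linarith [Int.le_ceil (-c g)])
    fun g hg => hg

/-- Let `N` be a lattice of rank `d ≥ 1` with dual lattice `M` (modelled as `ℤ^d ⊆ ℝ^d`),
and let `σ ⊆ N_ℝ` be a rational polyhedral cone with `dim σ = d` and `σ ≠ N_ℝ`. Let
`U = conv(F) + cone(G) ⊆ N_ℝ` with `F ⊆ N_ℝ` finite and `G ⊆ N` finite, such that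
`0 ∈ U`, `⋃_{t>0} tU = σ`, and `N ∩ U` contains a finite set generating `σ` as a convex
cone. Let `a > 0` with `N ∩ int(aU) = ∅`. Set `l = d - dim(span(cone(G)))`, the corank of
the recession cone of `U`. Then `l ≥ 1` and there exists a nonzero `φ ∈ M` with `φ_ℝ`
nonnegative on `σ` and `φ_ℝ(U) ⊆ [0, 1/γ(l, a)]`. -/
theorem stmt_18 (d : ℕ) (hd : 1 ≤ d)
    (S : Finset (Fin d → ℝ)) (hS : (S : Set (Fin d → ℝ)) ⊆ intPts d)
    (σ : Set (Fin d → ℝ)) (hσ : σ = coneHull (S : Set (Fin d → ℝ)))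
    (hσdim : Submodule.span ℝ σ = ⊤) (hσne : σ ≠ Set.univ)
    (F G : Finset (Fin d → ℝ)) (hG : (G : Set (Fin d → ℝ)) ⊆ intPts d)
    (U : Set (Fin d → ℝ))
    (hUdef : U = {x | ∃ p ∈ convexHull ℝ (F : Set (Fin d → ℝ)),
      ∃ s ∈ coneHull (G : Set (Fin d → ℝ)), x = p + s})
    (hU0 : (0 : Fin d → ℝ) ∈ U)
    (hUσ : {x | ∃ t : ℝ, 0 < t ∧ ∃ u ∈ U, x = t • u} = σ)
    (hgen : ∃ S' : Finset (Fin d → ℝ), (S' : Set (Fin d → ℝ)) ⊆ intPts d ∩ U ∧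
      coneHull (S' : Set (Fin d → ℝ)) = σ)
    (a : ℝ) (ha : 0 < a)
    (hmld : intPts d ∩ interior (a • U) = ∅)
    (l : ℕ)
    (hl : l = d - Module.finrank ℝ
      (Submodule.span ℝ (coneHull (G : Set (Fin d → ℝ))))) :
    1 ≤ l ∧
    ∃ φ : Fin d → ℝ, φ ∈ intPts d ∧ φ ≠ 0 ∧
      (∀ e ∈ σ, 0 ≤ ∑ i, φ i * e i) ∧
      (∀ u ∈ U, (∑ i, φ i * u i) ∈ Set.Icc 0 (1 / gammaFn l a)) := by
  obtain ⟨k, j, π, s, r, ι, hkj, hπ, hs, -, -, hπs, -, -, -, hker⟩ :=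
    exists_splitting (G : Set (Fin d → ℝ)) hG
  have hsurj : Function.Surjective π := fun y => ⟨s y, hπs y⟩
  obtain rfl : l = j := by
    have h1 := π.finrank_range_add_finrank_ker
    rw [LinearMap.range_eq_top.2 hsurj, finrank_top, hker, ← span_coneHull] at h1
    simp only [Module.finrank_fin_fun] at h1
    omega
  have hUadd : U = convexHull ℝ (F : Set (Fin d → ℝ)) + coneHull (G : Set (Fin d → ℝ)) := by
    rw [hUdef]
    ext x
    simp only [Set.mem_add, Set.mem_ofPred_eq, eq_comm]
  have hUconv : Convex ℝ U := hUadd ▸ (convex_convexHull ℝ _).add (convex_coneHull _)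
  have hUtrans : ∀ c ∈ coneHull (G : Set (Fin d → ℝ)), ∀ x ∈ U, x + c ∈ U := by
    rintro c hc x hx
    rw [hUdef] at hx ⊢
    obtain ⟨p, hp, q, hq, rfl⟩ := hx
    exact ⟨p, hp, q + c, coneHull_add hq hc, add_assoc p q c⟩
  have hUsub : U ⊆ σ := fun u hu => hUσ ▸ ⟨1, one_pos, u, hu, (one_smul ℝ u).symm⟩
  have hUne : (interior U).Nonempty := by
    refine interior_nonempty_of_span_eq_top hUconv hU0 (top_le_iff.1 ?_)
    rw [← hσdim, Submodule.span_le, ← hUσ]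
    rintro _ ⟨t, -, u, hu, rfl⟩
    exact Submodule.smul_mem _ _ (Submodule.subset_span hu)
  have hπG : ∀ x ∈ Submodule.span ℝ (G : Set (Fin d → ℝ)), π x = 0 := fun x hx => by
    rw [← hker] at hx; exact hx
  have hKimg : π '' U = π '' convexHull ℝ (F : Set (Fin d → ℝ)) := by
    rw [hUadd, Set.image_add]
    ext y
    constructor
    · rintro ⟨_, ⟨p, hp, rfl⟩, _, ⟨q, hq, rfl⟩, rfl⟩
      exact ⟨p, hp, by simp [hπG q (coneHull_subset_span _ hq)]⟩
    · rintro ⟨p, hp, rfl⟩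
      exact ⟨_, ⟨p, hp, rfl⟩, _, ⟨0, coneHull_zero _, rfl⟩, by simp⟩
  have hKc : IsCompact (π '' U) := hKimg ▸
    (F.finite_toSet.isCompact_convexHull ℝ).image π.continuous_of_finiteDimensional
  have hKne : (interior (π '' U)).Nonempty := (hUne.image π).mono
    ((π.isOpenMap_of_finiteDimensional hsurj).image_interior_subset U)
  have hKT : π '' U ⊆ coneHull (intPts l ∩ π '' U) := by
    obtain ⟨S', hS', hS'σ⟩ := hgen
    rintro _ ⟨u, hu, rfl⟩
    have h1 : π u ∈ π '' coneHull (S' : Set (Fin d → ℝ)) := ⟨u, hS'σ ▸ hUsub hu, rfl⟩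
    rw [← coneHull_image] at h1
    refine coneHull_mono ?_ h1
    rintro _ ⟨v, hv, rfl⟩
    exact ⟨hπ v (hS' hv).1, v, (hS' hv).2, rfl⟩
  have hlat : ∀ y ∈ intPts l, y ∉ a • interior (π '' U) := by
    rintro y hy ⟨w, hw, rfl⟩
    obtain ⟨u, hu, rfl⟩ := exists_mem_interior_of_mem_interior_image hUconv hUne π hw
    obtain ⟨z, hz, hzspan, hzG⟩ := exists_intPts_add_mem_coneHull G hG
      (z := s (a • π u) - a • u) (by
        rw [← hker, LinearMap.mem_ker, map_sub, hπs, map_smul, sub_self])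
    have hmem := add_mem_interior_of_forall_add_mem
      (hUtrans _ (coneHull_smul (inv_nonneg.2 ha.le) hzG)) hu
    have : s (a • π u) + z ∈ intPts d ∩ interior (a • U) := by
      refine ⟨intPts_add (hs _ hy) hz, ?_⟩
      rw [interior_smul₀ ha.ne']
      refine ⟨_, hmem, ?_⟩
      simp only [smul_add, smul_smul, mul_inv_cancel₀ ha.ne', one_smul]
      abel
    rw [hmld] at this
    exact this
  have hl1 : 1 ≤ l := by
    by_contra! h
    obtain rfl : l = 0 := by omega
    obtain ⟨w, hw⟩ := hKne
    exact hlat 0 intPts_zero ⟨w, hw, Subsingleton.elim _ _⟩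
  obtain ⟨Φ, hΦ0, hΦint, hΦ⟩ := exists_thin_functional l (π '' U) hl1 (hUconv.linear_image π) hKc
    ⟨0, hU0, map_zero π⟩ hKne hKT a ha hlat
  have hpair : ∀ x : Fin d → ℝ, ∑ i, Φ (π (Pi.single i 1)) * x i = Φ (π x) := fun x => by
    conv_rhs => rw [pi_eq_sum_univ' x]
    simp [mul_comm]
  refine ⟨hl1, fun i => Φ (π (Pi.single i 1)),
    fun i => hΦint _ (hπ _ (intPts_single i)), fun h => hΦ0 ?_, fun e he => ?_, fun u hu => ?_⟩
  · refine LinearMap.ext fun y => ?_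
    rw [← hπs y, ← hpair]
    simp [fun i => congrFun h i]
  · rw [hpair]
    rw [← hUσ] at he
    obtain ⟨t, ht, u, hu, rfl⟩ := he
    rw [map_smul, map_smul]
    exact mul_nonneg ht.le (hΦ _ ⟨u, hu, rfl⟩).1
  · rw [hpair]
    exact hΦ _ ⟨u, hu, rfl⟩
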